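/- arXiv:2408.06172 — 3 statements merged into one kernel-verified Lean document; each statement's English description precedes it below -/
import Mathlib

section
/- Let n ≥ 1, let p > −n−1, and let K be a smooth, strictly convex body in ℝ^{n+1} with positive support function h satisfying det(A(x) + x⊗x) = h(x)^{p−1} for all x ∈ S^n (i.e. dV = h^p dθ). Set c := (∫ ∇h_K h^p dθ)/(∫ h^p dθ) and h̃(x) := h(x) − ⟨x, c⟩. Then ∫_{S^n} (|∇h_K(x)|² − h(x)²) h^p dθ = ∫_{S^n} (|∇h_K(x) − c|² − h̃(x)²) h^p dθ + (n(n+1−p)|c|²/((n+1)(n+1+p)))·∫_{S^n} h^p dθ; equivalently ∫|∇̄h|² dV = ∫|∇̄h̃|² dV + (n(n+1−p)|c|²/((n+1)(n+1+p)))·∫ dV. -/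
open MeasureTheory Metric Real
open scoped InnerProductSpace ENNReal Topology

noncomputable section

/-- Euclidean space `ℝ^{n+1}`. -/
abbrev Eu (n : ℕ) : Type := EuclideanSpace ℝ (Fin (n + 1))

/-- The unit sphere `S^n ⊆ ℝ^{n+1}` as a subtype. -/
abbrev Sph (n : ℕ) : Type := Metric.sphere (0 : Eu n) 1

/-- The spherical Lebesgue (surface) measure on `S^n`. -/
def sphMeas (n : ℕ) : Measure (Sph n) := (volume : Measure (Eu n)).toSphere

/-- The support function of a set `K ⊆ ℝ^{n+1}`. -/
def sfn {n : ℕ} (K : Set (Eu n)) (z : Eu n) : ℝ :=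
  sSup ((fun y => ⟪z, y⟫_ℝ) '' K)

/-- The Hessian endomorphism `A(x) = D(∇ h_K)(x)`. -/
def hessA {n : ℕ} (K : Set (Eu n)) (x : Eu n) : Eu n →L[ℝ] Eu n :=
  fderiv ℝ (gradient (sfn K)) x

/-- The rank-one endomorphism `x ⊗ x : v ↦ ⟨v, x⟩ x`. -/
def tens {n : ℕ} (x : Eu n) : Eu n →L[ℝ] Eu n :=
  (innerSL ℝ x).smulRight x

/-- `det (A(x) + x ⊗ x)`, the reciprocal Gauss curvature `1/𝒦` at `x ∈ S^n`. -/
def rK {n : ℕ} (K : Set (Eu n)) (x : Eu n) : ℝ :=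
  LinearMap.det ((hessA K x + tens x : Eu n →L[ℝ] Eu n) : Eu n →ₗ[ℝ] Eu n)

/-- `K` is a smooth, strictly convex body with positive support function. -/
structure IsSmoothConvexBody {n : ℕ} (K : Set (Eu n)) : Prop where
  compact : IsCompact K
  convex : Convex ℝ K
  interior_nonempty : (interior K).Nonempty
  pos : ∀ x : Sph n, 0 < sfn K x
  smooth : ContDiffOn ℝ (⊤ : ℕ∞) (sfn K) {(0 : Eu n)}ᶜ
  posdef : ∀ x : Sph n, ∀ v : Eu n, v ≠ 0 →
    0 < ⟪(hessA K (x : Eu n) + tens (x : Eu n)) v, v⟫_ℝ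

/-- The density `h·det(A + x⊗x)` of the measure `dV` with respect to `dθ`. -/
def dens {n : ℕ} (K : Set (Eu n)) (x : Eu n) : ℝ := sfn K x * rK K x

/-- The centroid-type point `c(K) = (∫ ∇h_K dV)/(∫ dV)`. -/
def cK {n : ℕ} (K : Set (Eu n)) : Eu n :=
  (∫ x : Sph n, dens K x ∂sphMeas n)⁻¹ •
    ∫ x : Sph n, dens K x • gradient (sfn K) x ∂sphMeas n

/-- The support function of the translated body `K - c(K)`. -/
def tsfn {n : ℕ} (K : Set (Eu n)) (x : Eu n) : ℝ := sfn K x - ⟪x, cK K⟫_ℝ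

/-- Radial Gaussian moments. -/
def gam (s : ℕ) : ℝ := ∫ r in Set.Ioi (0 : ℝ), r ^ s * Real.exp (-r ^ 2)

lemma gam_eq (s : ℕ) : gam s = (1 / 2) * Real.Gamma (((s : ℝ) + 1) / 2) := by
  rw [← integral_rpow_mul_exp_neg_rpow (p := 2) (q := s) (by norm_num)
    (by have : (0 : ℝ) ≤ s := Nat.cast_nonneg s
        linarith)]
  unfold gam
  refine setIntegral_congr_fun measurableSet_Ioi (fun x hx => ?_)
  simp

lemma gam_pos (s : ℕ) : 0 < gam s := by
  rw [gam_eq]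
  have : 0 < Real.Gamma (((s : ℝ) + 1) / 2) := Real.Gamma_pos_of_pos (by positivity)
  positivity

lemma gam_succ (s : ℕ) : 2 * gam (s + 2) = ((s : ℝ) + 1) * gam s := by
  rw [gam_eq, gam_eq]
  have h : (((s + 2 : ℕ) : ℝ) + 1) / 2 = ((s : ℝ) + 1) / 2 + 1 := by push_cast; ring
  rw [h, Real.Gamma_add_one (by positivity)]
  ring

lemma gam_integrable (s : ℕ) :
    IntegrableOn (fun r : ℝ => r ^ s * Real.exp (-r ^ 2)) (Set.Ioi 0) := by
  by_contra h
  have := integral_undef h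
  have h2 := gam_pos s
  unfold gam at h2
  linarith

lemma polar_aux {n : ℕ} (g : Eu n → ℝ) (F : Sph n → ℝ) (q : ℕ)
    (hg : ∀ x : Sph n, ∀ r : ℝ, 0 < r → g (r • (x : Eu n)) = F x * (r ^ q * Real.exp (-r ^ 2))) :
    (∫ z, g z = (∫ x, F x ∂sphMeas n) * gam (n + q)) ∧ (Continuous F → Integrable g) := by
  have hmp := (volume : Measure (Eu n)).measurePreserving_homeomorphUnitSphereProd
  have hdim : Module.finrank ℝ (Eu n) - 1 = n := by simp
  rw [hdim] at hmp
  have hemb := (homeomorphUnitSphereProd (Eu n)).measurableEmbedding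
  let G : Sph n × Set.Ioi (0 : ℝ) → ℝ := fun z => F z.1 * ((z.2 : ℝ) ^ q * Real.exp (-(z.2 : ℝ) ^ 2))
  have hG : ∀ z : ({0}ᶜ : Set (Eu n)), G (homeomorphUnitSphereProd (Eu n) z) = g z := by
    intro z
    obtain ⟨w, rfl⟩ := (homeomorphUnitSphereProd (Eu n)).symm.surjective z
    simp only [Homeomorph.apply_symm_apply]
    rw [homeomorphUnitSphereProd_symm_apply_coe, hg _ _ w.2.2]
  have hms : MeasurableSet ({0}ᶜ : Set (Eu n)) := (measurableSet_singleton _).compl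
  have hrad : ∫ y : Set.Ioi (0 : ℝ), ((y : ℝ) ^ q * Real.exp (-(y : ℝ) ^ 2)) ∂Measure.volumeIoiPow n
      = gam (n + q) := by
    unfold Measure.volumeIoiPow
    rw [integral_withDensity_eq_integral_toReal_smul (by fun_prop) (by simp)]
    unfold gam
    rw [← integral_subtype_comap measurableSet_Ioi
      (fun r : ℝ => r ^ (n + q) * Real.exp (-r ^ 2))]
    refine integral_congr_ae (.of_forall fun y => ?_)
    have hy : (0 : ℝ) < y := y.2
    simp only [smul_eq_mul]
    rw [ENNReal.toReal_ofReal (by positivity)]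
    ring
  have hradI : Integrable (fun y : Set.Ioi (0 : ℝ) => ((y : ℝ) ^ q * Real.exp (-(y : ℝ) ^ 2)))
      (Measure.volumeIoiPow n) := by
    by_contra h
    have h1 := integral_undef h
    have h2 := gam_pos (n + q)
    linarith
  constructor
  · have h1 : ∫ z, g z = ∫ z in ({0}ᶜ : Set (Eu n)), g z := by
      rw [restrict_compl_singleton]
    rw [h1, ← integral_subtype_comap hms]
    have h2 := hmp.integral_comp hemb G
    simp only [hG] at h2
    rw [h2]
    simp only [G]
    rw [integral_prod_mul F (fun y : Set.Ioi (0 : ℝ) => ((y : ℝ) ^ q * Real.exp (-(y : ℝ) ^ 2))), hrad]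
    rfl
  · intro hF
    have hFI : Integrable F (volume : Measure (Eu n)).toSphere :=
      hF.integrable_of_hasCompactSupport (HasCompactSupport.of_compactSpace F)
    have h3 : Integrable G _ := hFI.mul_prod hradI
    rw [← hmp.integrable_comp_emb hemb] at h3
    rw [← restrict_compl_singleton (μ := (volume : Measure (Eu n))) 0]
    rw [← IntegrableOn, integrableOn_iff_comap_subtypeVal hms]
    refine h3.congr (.of_forall fun z => ?_)
    simp only [Function.comp]
    exact hG z

lemma polar_int {n : ℕ} (g : Eu n → ℝ) (F : Sph n → ℝ) (q : ℕ)
    (hg : ∀ x : Sph n, ∀ r : ℝ, 0 < r → g (r • (x : Eu n)) = F x * (r ^ q * Real.exp (-r ^ 2))) :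
    ∫ z, g z = (∫ x, F x ∂sphMeas n) * gam (n + q) := (polar_aux g F q hg).1

lemma polar_integrable {n : ℕ} (g : Eu n → ℝ) (F : Sph n → ℝ) (q : ℕ) (hF : Continuous F)
    (hg : ∀ x : Sph n, ∀ r : ℝ, 0 < r → g (r • (x : Eu n)) = F x * (r ^ q * Real.exp (-r ^ 2))) :
    Integrable g := (polar_aux g F q hg).2 hF

lemma hasFDerivAt_zero_of_quad {n : ℕ} (F : Eu n → ℝ) (C : ℝ) (h0 : F 0 = 0)
    (hF : ∀ z, |F z| ≤ C * ‖z‖ ^ 2) : HasFDerivAt F (0 : Eu n →L[ℝ] ℝ) 0 := by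
  apply HasFDerivAt.of_isLittleO
  simp only [h0, sub_zero, _root_.zero_apply]
  have h1 : F =O[𝓝 0] fun z : Eu n => ‖z‖ ^ 2 := by
    apply Asymptotics.IsBigO.of_bound C
    filter_upwards with z
    simpa using hF z
  refine h1.trans_isLittleO ?_
  exact Asymptotics.isLittleO_norm_pow_id one_lt_two

lemma sph_ne {n : ℕ} (x : Sph n) : (x : Eu n) ≠ 0 := by
  intro h
  have := x.2
  simp [h] at this

lemma sph_norm {n : ℕ} (x : Sph n) : ‖(x : Eu n)‖ = 1 := by
  simp

lemma exists_sph {n : ℕ} (z : Eu n) (hz : z ≠ 0) : ∃ x : Sph n, z = ‖z‖ • (x : Eu n) :=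
  ⟨⟨‖z‖⁻¹ • z, by simp [norm_smul, hz]⟩, by simp [smul_smul, hz]⟩

lemma exists_bound_sph {n : ℕ} (f : Sph n → ℝ) (hf : Continuous f) : ∃ C, ∀ x, |f x| ≤ C := by
  obtain ⟨C, hC⟩ := (isCompact_univ (X := Sph n)).exists_bound_of_continuousOn hf.continuousOn
  exact ⟨C, fun x => by simpa using hC x (Set.mem_univ x)⟩

lemma cont_sph {n : ℕ} {Y : Type*} [TopologicalSpace Y] (f : Eu n → Y)
    (hf : ContinuousOn f {0}ᶜ) : Continuous (fun x : Sph n => f x) :=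
  hf.comp_continuous continuous_subtype_val (fun x => sph_ne x)

lemma gauss_deriv {n : ℕ} (z v : Eu n) :
    fderiv ℝ (fun z : Eu n => Real.exp (-‖z‖ ^ 2)) z v
      = Real.exp (-‖z‖ ^ 2) * (-(2 * ⟪z, v⟫_ℝ)) := by
  have h : HasFDerivAt (fun z : Eu n => ‖z‖ ^ 2) (2 • innerSL ℝ z) z :=
    (hasStrictFDerivAt_norm_sq z).hasFDerivAt
  have h2 : HasFDerivAt (fun z : Eu n => Real.exp (-‖z‖ ^ 2))
      (Real.exp (-‖z‖ ^ 2) • (-(2 • innerSL ℝ z) : Eu n →L[ℝ] ℝ)) z := h.neg.exp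
  rw [h2.fderiv]
  simp

lemma gauss_diff {n : ℕ} : Differentiable ℝ (fun z : Eu n => Real.exp (-‖z‖ ^ 2)) :=
  ((contDiff_norm_sq ℝ (n := 1)).differentiable (by norm_num)).neg.exp

/-- The divergence theorem on the sphere for functions homogeneous of degree two. -/
lemma sphere_div {n : ℕ} (F : Eu n → ℝ) (hF : ContDiffOn ℝ 1 F {0}ᶜ)
    (hom : ∀ z : Eu n, ∀ r : ℝ, 0 < r → F (r • z) = r ^ 2 * F z) (v : Eu n) :
    ∫ x : Sph n, fderiv ℝ F x v ∂sphMeas n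
      = ((n : ℝ) + 2) * ∫ x : Sph n, F x * ⟪(x : Eu n), v⟫_ℝ ∂sphMeas n := by
  have hopen : IsOpen ({0}ᶜ : Set (Eu n)) := isOpen_compl_singleton
  have hd : ∀ z : Eu n, z ≠ 0 → DifferentiableAt ℝ F z := fun z hz =>
    (hF.differentiableOn (by norm_num)).differentiableAt (hopen.mem_nhds hz)
  have hF0 : F 0 = 0 := by
    have := hom 0 2 (by norm_num)
    simp at this
    linarith
  have hcF : Continuous (fun x : Sph n => F x) := cont_sph F hF.continuousOn
  have hcF' : Continuous (fun x : Sph n => fderiv ℝ F x v) :=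
    (cont_sph _ (hF.continuousOn_fderiv_of_isOpen hopen le_rfl)).clm_apply continuous_const
  obtain ⟨C, hC⟩ := exists_bound_sph _ hcF
  have hquad : ∀ z, |F z| ≤ C * ‖z‖ ^ 2 := by
    intro z
    by_cases hz : z = 0
    · simp [hz, hF0]
    · obtain ⟨x, hx⟩ := exists_sph z hz
      have : F z = ‖z‖ ^ 2 * F x := by
        conv_lhs => rw [hx]
        exact hom _ _ (norm_pos_iff.2 hz)
      rw [this, abs_mul, abs_of_nonneg (by positivity), mul_comm]
      gcongr
      exact hC x
  have hd0 := hasFDerivAt_zero_of_quad F C hF0 hquad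
  have hdall : Differentiable ℝ F := fun z => by
    by_cases hz : z = 0
    · rw [hz]; exact hd0.differentiableAt
    · exact hd z hz
  have hom' : ∀ x : Sph n, ∀ r : ℝ, 0 < r →
      fderiv ℝ F (r • (x : Eu n)) v = r * fderiv ℝ F x v := by
    intro x r hr
    have h1 : HasFDerivAt (fun z : Eu n => F (r • z))
        ((fderiv ℝ F (r • (x : Eu n))).comp (r • ContinuousLinearMap.id ℝ (Eu n))) x :=
      (hdall (r • (x : Eu n))).hasFDerivAt.comp (x : Eu n)
        ((hasFDerivAt_id (x : Eu n)).const_smul r)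
    have h2 : HasFDerivAt (fun z : Eu n => F (r • z)) (r ^ 2 • fderiv ℝ F x) x := by
      simp only [hom _ r hr]
      exact (hdall (x : Eu n)).hasFDerivAt.const_mul _
    have h3 := congrArg (fun L => L v) (h1.unique h2)
    simp only [ContinuousLinearMap.comp_apply, _root_.smul_apply,
      ContinuousLinearMap.id_apply, map_smul, smul_eq_mul] at h3
    have : r * (fderiv ℝ F (r • (x : Eu n)) v - r * fderiv ℝ F x v) = 0 := by
      rw [mul_sub, h3]; ring
    rcases mul_eq_zero.1 this with h | h
    · exact absurd h hr.ne'
    · linarith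
  have hn : ∀ x : Sph n, ∀ r : ℝ, 0 < r → ‖r • (x : Eu n)‖ = r := fun x r hr => by
    rw [norm_smul, sph_norm, mul_one, Real.norm_of_nonneg hr.le]
  have e1 : ∀ x : Sph n, ∀ r : ℝ, 0 < r →
      fderiv ℝ F (r • (x : Eu n)) v * Real.exp (-‖r • (x : Eu n)‖ ^ 2)
        = fderiv ℝ F x v * (r ^ 1 * Real.exp (-r ^ 2)) := fun x r hr => by
    rw [hn x r hr, hom' x r hr]; ring
  have e2 : ∀ x : Sph n, ∀ r : ℝ, 0 < r →
      F (r • (x : Eu n)) * fderiv ℝ (fun z : Eu n => Real.exp (-‖z‖ ^ 2)) (r • (x : Eu n)) v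
        = (-2 * (F x * ⟪(x : Eu n), v⟫_ℝ)) * (r ^ 3 * Real.exp (-r ^ 2)) := fun x r hr => by
    rw [gauss_deriv, hn x r hr, hom _ r hr, real_inner_smul_left]; ring
  have e3 : ∀ x : Sph n, ∀ r : ℝ, 0 < r →
      F (r • (x : Eu n)) * Real.exp (-‖r • (x : Eu n)‖ ^ 2)
        = F x * (r ^ 2 * Real.exp (-r ^ 2)) := fun x r hr => by
    rw [hn x r hr, hom _ r hr]; ring
  have key := integral_mul_fderiv_eq_neg_fderiv_mul_of_integrable (μ := (volume : Measure (Eu n)))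
    (f := F) (g := fun z : Eu n => Real.exp (-‖z‖ ^ 2)) (v := v)
    (polar_integrable _ _ 1 hcF' e1)
    (polar_integrable _ _ 3 (continuous_const.mul (hcF.mul (by fun_prop))) e2)
    (polar_integrable _ _ 2 hcF e3)
    (fun z _ => hdall z) (fun z _ => gauss_diff z)
  rw [polar_int _ _ 3 e2, polar_int _ _ 1 e1, integral_const_mul] at key
  have hg := gam_succ (n + 1)
  have hgp := gam_pos (n + 1)
  rw [show n + 1 + 2 = n + 3 by ring] at hg
  push_cast at hg
  set I := ∫ x : Sph n, fderiv ℝ F x v ∂sphMeas n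
  set J := ∫ x : Sph n, F x * ⟪(x : Eu n), v⟫_ℝ ∂sphMeas n
  have h5 : gam (n + 1) * (I - ((n : ℝ) + 2) * J) = 0 := by
    linear_combination key + J * hg
  rcases mul_eq_zero.1 h5 with h | h
  · exact absurd h hgp.ne'
  · linarith

section geom
variable {n : ℕ} {K : Set (Eu n)}

lemma K_nonempty (hK : IsSmoothConvexBody K) : K.Nonempty :=
  hK.interior_nonempty.mono interior_subset

lemma sfn_exists (hK : IsSmoothConvexBody K) (z : Eu n) :
    ∃ y ∈ K, sfn K z = ⟪z, y⟫_ℝ ∧ ∀ w, ⟪w, y⟫_ℝ ≤ sfn K w := by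
  have hbd : ∀ w : Eu n, BddAbove ((fun y => ⟪w, y⟫_ℝ) '' K) := fun w =>
    (hK.compact.image (by fun_prop)).bddAbove
  obtain ⟨y, hy, hmax⟩ := hK.compact.exists_isMaxOn (K_nonempty hK)
    (f := fun y => ⟪z, y⟫_ℝ) (by fun_prop)
  refine ⟨y, hy, ?_, fun w => le_csSup (hbd w) ⟨y, hy, rfl⟩⟩
  apply le_antisymm
  · apply csSup_le ((K_nonempty hK).image _)
    rintro _ ⟨u, hu, rfl⟩
    exact hmax hu
  · exact le_csSup (hbd z) ⟨y, hy, rfl⟩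

lemma sfn_hom (hK : IsSmoothConvexBody K) (z : Eu n) (r : ℝ) (hr : 0 < r) :
    sfn K (r • z) = r * sfn K z := by
  obtain ⟨y, hy, h1, h2⟩ := sfn_exists hK z
  obtain ⟨y', hy', h1', h2'⟩ := sfn_exists hK (r • z)
  apply le_antisymm
  · rw [h1', real_inner_smul_left]
    exact mul_le_mul_of_nonneg_left (h2' z) hr.le
  · have := h2 (r • z)
    rw [real_inner_smul_left, ← h1] at this
    exact this

lemma sfn_add_le (hK : IsSmoothConvexBody K) (z w : Eu n) :
    sfn K (z + w) ≤ sfn K z + sfn K w := by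
  obtain ⟨y, hy, h1, h2⟩ := sfn_exists hK (z + w)
  rw [h1, inner_add_left]
  exact add_le_add (h2 z) (h2 w)

lemma sfn_zero (hK : IsSmoothConvexBody K) : sfn K 0 = 0 := by
  obtain ⟨y, hy, h1, h2⟩ := sfn_exists hK (0 : Eu n)
  simpa using h1

lemma sfn_pos (hK : IsSmoothConvexBody K) (z : Eu n) (hz : z ≠ 0) : 0 < sfn K z := by
  obtain ⟨x, hx⟩ := exists_sph z hz
  rw [hx, sfn_hom hK _ _ (norm_pos_iff.2 hz)]
  exact mul_pos (norm_pos_iff.2 hz) (hK.pos x)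

lemma sfn_diffAt (hK : IsSmoothConvexBody K) (z : Eu n) (hz : z ≠ 0) :
    DifferentiableAt ℝ (sfn K) z :=
  (hK.smooth.differentiableOn (by simp)).differentiableAt (isOpen_compl_singleton.mem_nhds hz)

lemma sfn_fderiv (hK : IsSmoothConvexBody K) (z : Eu n) (hz : z ≠ 0) :
    HasFDerivAt (sfn K) (innerSL ℝ (gradient (sfn K) z)) z := by
  have := (sfn_diffAt hK z hz).hasGradientAt.hasFDerivAt
  have h2 : InnerProductSpace.toDual ℝ (Eu n) (gradient (sfn K) z)
      = innerSL ℝ (gradient (sfn K) z) := by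
    ext v; simp
  rwa [h2] at this

lemma grad_unique (hK : IsSmoothConvexBody K) (z y : Eu n) (hz : z ≠ 0)
    (h1 : ⟪z, y⟫_ℝ = sfn K z) (h2 : ∀ w, ⟪w, y⟫_ℝ ≤ sfn K w) : gradient (sfn K) z = y := by
  have hmin : IsLocalMin (fun w => sfn K w - ⟪y, w⟫_ℝ) z := by
    filter_upwards with w
    rw [real_inner_comm, h1, real_inner_comm]
    linarith [h2 w]
  have hd : HasFDerivAt (fun w => sfn K w - ⟪y, w⟫_ℝ)
      (innerSL ℝ (gradient (sfn K) z) - innerSL ℝ y) z :=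
    (sfn_fderiv hK z hz).sub (innerSL ℝ y).hasFDerivAt
  have h0 := hmin.hasFDerivAt_eq_zero hd
  rw [← map_sub] at h0
  have h3 := congrArg (fun L => L (gradient (sfn K) z - y)) h0
  simp only [innerSL_apply_apply, _root_.zero_apply, inner_self_eq_zero] at h3
  exact sub_eq_zero.1 h3

lemma grad_spec (hK : IsSmoothConvexBody K) (z : Eu n) (hz : z ≠ 0) :
    ⟪z, gradient (sfn K) z⟫_ℝ = sfn K z ∧ ∀ w, ⟪w, gradient (sfn K) z⟫_ℝ ≤ sfn K w := by
  obtain ⟨y, hy, h1, h2⟩ := sfn_exists hK z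
  rw [grad_unique hK z y hz h1.symm h2]
  exact ⟨h1.symm, h2⟩

lemma grad_hom (hK : IsSmoothConvexBody K) (z : Eu n) (hz : z ≠ 0) (r : ℝ) (hr : 0 < r) :
    gradient (sfn K) (r • z) = gradient (sfn K) z := by
  obtain ⟨h1, h2⟩ := grad_spec hK z hz
  apply grad_unique hK _ _ (smul_ne_zero hr.ne' hz) _ h2
  rw [real_inner_smul_left, h1, sfn_hom hK z r hr]

lemma grad_smooth (hK : IsSmoothConvexBody K) :
    ContDiffOn ℝ 1 (gradient (sfn K)) ({0}ᶜ : Set (Eu n)) := by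
  have h1 : ContDiffOn ℝ 1 (fderiv ℝ (sfn K)) ({0}ᶜ : Set (Eu n)) :=
    hK.smooth.fderiv_of_isOpen isOpen_compl_singleton (by
      have : ((2 : ℕ∞) : WithTop ℕ∞) ≤ ((⊤ : ℕ∞) : WithTop ℕ∞) := WithTop.coe_le_coe.2 le_top
      convert this using 1; norm_num)
  exact (InnerProductSpace.toDual ℝ (Eu n)).symm.toContinuousLinearEquiv.contDiff.comp_contDiffOn h1

lemma grad_strict (hK : IsSmoothConvexBody K) (z : Eu n) (hz : z ≠ 0) :
    HasStrictFDerivAt (gradient (sfn K)) (hessA K z) z :=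
  ((grad_smooth hK).contDiffAt (isOpen_compl_singleton.mem_nhds hz)).hasStrictFDerivAt (by norm_num)

lemma hess_self (hK : IsSmoothConvexBody K) (z : Eu n) (hz : z ≠ 0) : hessA K z z = 0 := by
  have h1 : HasDerivAt (fun t : ℝ => t • z) z 1 := by
    simpa using (hasDerivAt_id (1 : ℝ)).smul_const z
  have h2 : HasFDerivAt (gradient (sfn K)) (hessA K z) ((1 : ℝ) • z) := by
    rw [one_smul]; exact (grad_strict hK z hz).hasFDerivAt
  have h3 := h2.comp_hasDerivAt (1 : ℝ) h1
  have h4 : (gradient (sfn K) ∘ fun t : ℝ => t • z) =ᶠ[𝓝 1] fun _ => gradient (sfn K) z := by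
    filter_upwards [lt_mem_nhds (zero_lt_one (α := ℝ))] with t ht
    exact grad_hom hK z hz t ht
  exact h3.unique ((hasDerivAt_const (1 : ℝ) (gradient (sfn K) z)).congr_of_eventuallyEq h4)

lemma hess_inner (hK : IsSmoothConvexBody K) (z v : Eu n) (hz : z ≠ 0) :
    ⟪z, hessA K z v⟫_ℝ = 0 := by
  have h1 := (hasFDerivAt_id z).inner ℝ (grad_strict hK z hz).hasFDerivAt
  have h4 : (fun w : Eu n => ⟪id w, gradient (sfn K) w⟫_ℝ) =ᶠ[𝓝 z] sfn K := by
    filter_upwards [isOpen_compl_singleton.mem_nhds hz] with w hw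
    exact (grad_spec hK w hw).1
  have h5 := congrArg (fun L => L v) (h1.unique ((sfn_fderiv hK z hz).congr_of_eventuallyEq h4))
  simpa [fderivInnerCLM_apply, real_inner_comm v] using h5

lemma hess_hom (hK : IsSmoothConvexBody K) (z : Eu n) (hz : z ≠ 0) (r : ℝ) (hr : 0 < r) :
    r • hessA K (r • z) = hessA K z := by
  have h1 : HasFDerivAt (fun w : Eu n => gradient (sfn K) (r • w))
      ((hessA K (r • z)).comp (r • ContinuousLinearMap.id ℝ (Eu n))) z :=
    (grad_strict hK (r • z) (smul_ne_zero hr.ne' hz)).hasFDerivAt.comp z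
      ((hasFDerivAt_id z).const_smul r)
  have h4 : (fun w : Eu n => gradient (sfn K) (r • w)) =ᶠ[𝓝 z] gradient (sfn K) := by
    filter_upwards [isOpen_compl_singleton.mem_nhds hz] with w hw
    exact grad_hom hK w hw r hr
  rw [← h1.unique ((grad_strict hK z hz).hasFDerivAt.congr_of_eventuallyEq h4)]
  ext v
  simp

/-- The one-homogeneous parametrization `z ↦ |z| ∇h(z)`. -/
def Phi (K : Set (Eu n)) (z : Eu n) : Eu n := ‖z‖ • gradient (sfn K) z

/-- The derivative of `Phi`, at a unit vector. -/
def dPhi (K : Set (Eu n)) (x : Eu n) : Eu n →L[ℝ] Eu n :=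
  hessA K x + (innerSL ℝ x).smulRight (gradient (sfn K) x)

lemma Phi_strict (hK : IsSmoothConvexBody K) (x : Sph n) (r : ℝ) (hr : 0 < r) :
    HasStrictFDerivAt (Phi K) (dPhi K x) (r • (x : Eu n)) := by
  have hz : r • (x : Eu n) ≠ 0 := smul_ne_zero hr.ne' (sph_ne x)
  have hn : ‖r • (x : Eu n)‖ = r := by
    rw [norm_smul, sph_norm, mul_one, Real.norm_of_nonneg hr.le]
  have h0 : HasStrictFDerivAt (fun z : Eu n => ‖z‖) (innerSL ℝ (x : Eu n)) (r • (x : Eu n)) := by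
    have h1 := (hasStrictFDerivAt_norm_sq (r • (x : Eu n))).sqrt (by rw [hn]; positivity)
    simp only [Real.sqrt_sq (norm_nonneg _)] at h1
    have h2 : ((1 / (2 * ‖r • (x : Eu n)‖)) • 2 • innerSL ℝ (r • (x : Eu n)) : Eu n →L[ℝ] ℝ)
        = innerSL ℝ (x : Eu n) := by
      rw [hn]
      ext v
      simp
      field_simp
    rwa [h2] at h1
  have h1 := h0.smul (grad_strict hK _ hz)
  have h2 : dPhi K x = ‖r • (x : Eu n)‖ • hessA K (r • (x : Eu n))
      + (innerSL ℝ (x : Eu n)).smulRight (gradient (sfn K) (r • (x : Eu n))) := by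
    rw [hn, hess_hom hK _ (sph_ne x) r hr, grad_hom hK _ (sph_ne x) r hr]
    rfl
  rw [h2]
  exact h1

lemma dPhi_det (hK : IsSmoothConvexBody K) (x : Sph n) :
    (dPhi K x).det = sfn K x * rK K x := by
  have hx := sph_ne x
  have hxx : ⟪(x : Eu n), (x : Eu n)⟫_ℝ = 1 := by
    rw [real_inner_self_eq_norm_sq, sph_norm]; norm_num
  have h1 : ((dPhi K x : Eu n →L[ℝ] Eu n) : Eu n →ₗ[ℝ] Eu n)
      = (LinearMap.transvection ((innerSL ℝ (x : Eu n) : Eu n →L[ℝ] ℝ) : Eu n →ₗ[ℝ] ℝ)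
          (gradient (sfn K) (x : Eu n) - x)) ∘ₗ
        ((hessA K x + tens (x : Eu n) : Eu n →L[ℝ] Eu n) : Eu n →ₗ[ℝ] Eu n) := by
    ext1 v
    simp [dPhi, tens, LinearMap.transvection.apply, inner_add_right, hess_inner hK _ _ hx,
      inner_smul_right, smul_sub]
  rw [ContinuousLinearMap.det, h1, LinearMap.det_comp, LinearMap.transvection.det]
  rw [rK]
  congr 1
  simp [inner_sub_right, (grad_spec hK _ hx).1]

end geom

section cov
variable {n : ℕ} {K : Set (Eu n)}

lemma norm_smul_sph (x : Sph n) (r : ℝ) (hr : 0 < r) : ‖r • (x : Eu n)‖ = r := by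
  rw [norm_smul, sph_norm, mul_one, Real.norm_of_nonneg hr.le]

lemma Phi_smul (hK : IsSmoothConvexBody K) (x : Sph n) (r : ℝ) (hr : 0 < r) :
    Phi K (r • (x : Eu n)) = r • gradient (sfn K) x := by
  rw [Phi, norm_smul_sph x r hr, grad_hom hK _ (sph_ne x) r hr]

lemma Phi_inner (hK : IsSmoothConvexBody K) (x : Sph n) (r : ℝ) (hr : 0 < r) :
    ⟪(x : Eu n), Phi K (r • (x : Eu n))⟫_ℝ = r * sfn K x := by
  rw [Phi_smul hK x r hr, inner_smul_right, (grad_spec hK _ (sph_ne x)).1]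

lemma Phi_ne (hK : IsSmoothConvexBody K) (x : Sph n) (r : ℝ) (hr : 0 < r) :
    Phi K (r • (x : Eu n)) ≠ 0 := by
  intro h
  have := Phi_inner hK x r hr
  rw [h, inner_zero_right] at this
  exact (mul_pos hr (hK.pos x)).ne this

lemma grad_inj (hK : IsSmoothConvexBody K) (x x' : Sph n)
    (h : gradient (sfn K) (x : Eu n) = gradient (sfn K) (x' : Eu n)) : x = x' := by
  have hx := sph_ne x
  obtain ⟨a1, a2⟩ := grad_spec hK _ hx
  obtain ⟨b1, -⟩ := grad_spec hK _ (sph_ne x')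
  rw [← h] at b1
  set y := gradient (sfn K) (x : Eu n) with hy
  have hA : hessA K x x' = 0 := by
    have h1 : HasDerivAt (fun t : ℝ => (x : Eu n) + t • (x' : Eu n)) (x' : Eu n) 0 := by
      simpa using ((hasDerivAt_id (0 : ℝ)).smul_const (x' : Eu n)).const_add (x : Eu n)
    have h2 : HasFDerivAt (gradient (sfn K)) (hessA K x) ((x : Eu n) + (0 : ℝ) • (x' : Eu n)) := by
      rw [zero_smul, add_zero]; exact (grad_strict hK _ hx).hasFDerivAt
    have h3 := (h2.comp_hasDerivAt (0 : ℝ) h1).hasDerivWithinAt (s := Set.Ici 0)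
    have hev : ∀ᶠ t : ℝ in 𝓝 0, (x : Eu n) + t • (x' : Eu n) ≠ 0 := by
      apply h1.continuousAt.eventually_ne
      simpa using hx
    have h4 : (gradient (sfn K) ∘ fun t : ℝ => (x : Eu n) + t • (x' : Eu n))
        =ᶠ[𝓝[Set.Ici 0] 0] fun _ => y := by
      filter_upwards [nhdsWithin_le_nhds hev, self_mem_nhdsWithin] with t ht ht0
      rcases (Set.mem_Ici.1 ht0).eq_or_lt with rfl | htp
      · simp [hy]
      · refine grad_unique hK _ _ ht (le_antisymm (a2 _) ?_) a2
        rw [inner_add_left, real_inner_smul_left, a1, b1, ← sfn_hom hK _ t htp]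
        exact sfn_add_le hK _ _
    have h5 := (hasDerivWithinAt_const (0 : ℝ) (Set.Ici 0) y).congr_of_eventuallyEq h4
      (by simp [hy])
    exact (uniqueDiffOn_Ici (0 : ℝ) 0 (by simp)).eq_deriv _ h3 h5
  have hu : (x' : Eu n) - ⟪(x : Eu n), (x' : Eu n)⟫_ℝ • (x : Eu n) = 0 := by
    by_contra hne
    have hp := hK.posdef x _ hne
    have hz : (hessA K (x : Eu n) + tens (x : Eu n))
        ((x' : Eu n) - ⟪(x : Eu n), (x' : Eu n)⟫_ℝ • (x : Eu n)) = 0 := by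
      simp [hA, hess_self hK _ hx, tens, inner_sub_right, inner_smul_right]
    rw [hz, inner_zero_left] at hp
    exact lt_irrefl _ hp
  have hu' := sub_eq_zero.1 hu
  have hpos : 0 < ⟪(x : Eu n), (x' : Eu n)⟫_ℝ := by
    have e := b1
    rw [hu', real_inner_smul_left, a1, ← hu'] at e
    have := hK.pos x'
    rw [← e] at this
    exact pos_of_mul_pos_left this (hK.pos x).le
  have hn := congrArg norm hu'
  rw [norm_smul_sph _ _ hpos, sph_norm] at hn
  rw [← hn, one_smul] at hu'
  exact Subtype.ext hu'.symm

lemma Phi_injOn (hK : IsSmoothConvexBody K) : Set.InjOn (Phi K) ({0}ᶜ : Set (Eu n)) := by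
  intro z hz z' hz' h
  obtain ⟨x, hx⟩ := exists_sph z hz
  obtain ⟨x', hx'⟩ := exists_sph z' hz'
  have hr : 0 < ‖z‖ := norm_pos_iff.2 hz
  have hr' : 0 < ‖z'‖ := norm_pos_iff.2 hz'
  generalize ‖z‖ = r at *
  generalize ‖z'‖ = r' at *
  subst hx hx'
  have key : ∀ (x x' : Sph n) (r r' : ℝ), 0 < r → 0 < r' →
      Phi K (r • (x : Eu n)) = Phi K (r' • (x' : Eu n)) → r' ≤ r := by
    intro x x' r r' hr hr' h
    have h1 := Phi_inner hK x' r' hr'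
    rw [← h, Phi_smul hK x r hr, inner_smul_right] at h1
    have h2 := (grad_spec hK _ (sph_ne x)).2 x'
    have h3 : r' * sfn K x' ≤ r * sfn K x' := by
      rw [← h1]; gcongr
    exact le_of_mul_le_mul_right h3 (hK.pos x')
  have hrr : r = r' := le_antisymm (key _ _ _ _ hr' hr h.symm) (key _ _ _ _ hr hr' h)
  subst hrr
  rw [Phi_smul hK x r hr, Phi_smul hK x' r hr] at h
  rw [grad_inj hK x x' (smul_right_injective _ hr.ne' h)]

lemma sfn_cont_sph (hK : IsSmoothConvexBody K) : Continuous (fun x : Sph n => sfn K x) :=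
  cont_sph _ hK.smooth.continuousOn

lemma Phi_surj (hK : IsSmoothConvexBody K) (y : Eu n) (hy : y ≠ 0) :
    ∃ x : Sph n, ∃ r : ℝ, 0 < r ∧ Phi K (r • (x : Eu n)) = y := by
  obtain ⟨x₁, hx₁⟩ := exists_sph y hy
  obtain ⟨x, -, hmax⟩ := (isCompact_univ (X := Sph n)).exists_isMaxOn ⟨x₁, Set.mem_univ _⟩
    (f := fun x : Sph n => ⟪(x : Eu n), y⟫_ℝ / sfn K x)
    (Continuous.continuousOn (Continuous.div (by fun_prop) (sfn_cont_sph hK)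
      (fun x => (hK.pos x).ne')))
  set j := ⟪(x : Eu n), y⟫_ℝ / sfn K x with hj
  have hmax' : ∀ x' : Sph n, ⟪(x' : Eu n), y⟫_ℝ ≤ j * sfn K x' := fun x' =>
    (div_le_iff₀ (hK.pos x')).1 (hmax (Set.mem_univ x'))
  have hjp : 0 < j := by
    have h1 := hmax' x₁
    have h2 : ⟪(x₁ : Eu n), y⟫_ℝ = ‖y‖ := by
      conv_lhs => rw [hx₁]
      rw [inner_smul_right, real_inner_self_eq_norm_sq, sph_norm]
      ring
    rw [h2] at h1
    exact pos_of_mul_pos_left ((norm_pos_iff.2 hy).trans_le h1) (hK.pos x₁).le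
  refine ⟨x, j, hjp, ?_⟩
  rw [Phi_smul hK x j hjp, grad_unique hK x (j⁻¹ • y) (sph_ne x), smul_inv_smul₀ hjp.ne']
  · have := (hK.pos x).ne'
    have h3 : j * sfn K x = ⟪(x : Eu n), y⟫_ℝ := by rw [hj]; field_simp
    rw [inner_smul_right, ← h3]; field_simp
  · intro w
    rw [inner_smul_right, inv_mul_le_iff₀ hjp]
    by_cases hw : w = 0
    · simp [hw, sfn_zero hK]
    · obtain ⟨x', hx'⟩ := exists_sph w hw
      have hwp := norm_pos_iff.2 hw
      rw [hx', real_inner_smul_left, sfn_hom hK _ _ hwp]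
      have := mul_le_mul_of_nonneg_left (hmax' x') hwp.le
      linarith

lemma Phi_image (hK : IsSmoothConvexBody K) : Phi K '' ({0}ᶜ : Set (Eu n)) = {0}ᶜ := by
  ext y
  constructor
  · rintro ⟨z, hz, rfl⟩
    obtain ⟨x, hx⟩ := exists_sph z hz
    rw [hx]
    exact Phi_ne hK x _ (norm_pos_iff.2 hz)
  · intro hy
    obtain ⟨x, r, hr, h⟩ := Phi_surj hK y hy
    exact ⟨_, smul_ne_zero hr.ne' (sph_ne x), h⟩

lemma cov_aux (hK : IsSmoothConvexBody K) (hpos : ∀ x : Sph n, 0 < rK K x)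
    (hrc : Continuous (fun x : Sph n => rK K x)) (g : Eu n → ℝ) (F : Sph n → ℝ) (q : ℕ)
    (hg : ∀ x : Sph n, ∀ r : ℝ, 0 < r →
      g (Phi K (r • (x : Eu n))) = F x * (r ^ q * Real.exp (-r ^ 2))) :
    (∫ y, g y = (∫ x : Sph n, sfn K x * rK K x * F x ∂sphMeas n) * gam (n + q))
      ∧ (Continuous F → Integrable g) := by
  have hms : MeasurableSet ({0}ᶜ : Set (Eu n)) := (measurableSet_singleton _).compl
  have hnx : ∀ x : Sph n, ∀ r : ℝ, 0 < r → ‖r • (x : Eu n)‖⁻¹ • r • (x : Eu n) = x := by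
    intro x r hr
    rw [norm_smul_sph x r hr, inv_smul_smul₀ hr.ne']
  have hder : ∀ z ∈ ({0}ᶜ : Set (Eu n)),
      HasFDerivWithinAt (Phi K) (dPhi K (‖z‖⁻¹ • z)) {0}ᶜ z := by
    intro z hz
    obtain ⟨x, hx⟩ := exists_sph z hz
    have hr : 0 < ‖z‖ := norm_pos_iff.2 hz
    obtain ⟨r, hrz⟩ : ∃ r, r = ‖z‖ := ⟨_, rfl⟩
    rw [← hrz] at hx hr
    clear hrz
    subst hx
    rw [hnx x r hr]
    exact (Phi_strict hK x r hr).hasFDerivAt.hasFDerivWithinAt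
  have h1 := integral_image_eq_integral_abs_det_fderiv_smul (volume : Measure (Eu n)) hms hder
    (Phi_injOn hK) g
  have h2 := integrableOn_image_iff_integrableOn_abs_det_fderiv_smul (volume : Measure (Eu n))
    hms hder (Phi_injOn hK) g
  rw [Phi_image hK] at h1 h2
  rw [IntegrableOn, IntegrableOn, restrict_compl_singleton] at h2
  rw [restrict_compl_singleton] at h1
  have e : ∀ x : Sph n, ∀ r : ℝ, 0 < r →
      |(dPhi K (‖r • (x : Eu n)‖⁻¹ • r • (x : Eu n))).det| • g (Phi K (r • (x : Eu n)))
        = (sfn K x * rK K x * F x) * (r ^ q * Real.exp (-r ^ 2)) := by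
    intro x r hr
    rw [hnx x r hr, dPhi_det hK, abs_of_pos (mul_pos (hK.pos x) (hpos x)), hg x r hr, smul_eq_mul]
    ring
  constructor
  · rw [h1]
    exact polar_int _ _ q e
  · intro hF
    rw [h2]
    exact polar_integrable _ _ q (((sfn_cont_sph hK).mul hrc).mul hF) e

/-- The squared gauge function of `K`. -/
def Qf (K : Set (Eu n)) (y : Eu n) : ℝ :=
  open Classical in if y = 0 then 0 else ‖Function.invFunOn (Phi K) {0}ᶜ y‖ ^ 2

lemma Qf_Phi (hK : IsSmoothConvexBody K) (x : Sph n) (r : ℝ) (hr : 0 < r) :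
    Qf K (Phi K (r • (x : Eu n))) = r ^ 2 := by
  rw [Qf, if_neg (Phi_ne hK x r hr),
    (Phi_injOn hK).leftInvOn_invFunOn (smul_ne_zero hr.ne' (sph_ne x) : r • (x : Eu n) ∈ ({0}ᶜ : Set (Eu n))),
    norm_smul_sph x r hr]

lemma Qf_deriv (hK : IsSmoothConvexBody K) (hpos : ∀ x : Sph n, 0 < rK K x)
    (x : Sph n) (r : ℝ) (hr : 0 < r) :
    HasFDerivAt (Qf K) ((2 * r / sfn K x) • innerSL ℝ (x : Eu n)) (Phi K (r • (x : Eu n))) := by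
  have hdet : (dPhi K x).det ≠ 0 := by
    rw [dPhi_det hK]; exact (mul_pos (hK.pos x) (hpos x)).ne'
  let e := (dPhi K x).toContinuousLinearEquivOfDetNeZero hdet
  have he : (e : Eu n →L[ℝ] Eu n) = dPhi K x :=
    ContinuousLinearMap.coe_toContinuousLinearEquivOfDetNeZero _ _
  have hz : r • (x : Eu n) ≠ 0 := smul_ne_zero hr.ne' (sph_ne x)
  have hs : HasStrictFDerivAt (Phi K) (e : Eu n →L[ℝ] Eu n) (r • (x : Eu n)) := by
    rw [he]; exact Phi_strict hK x r hr
  have hinv : HasFDerivAt (Function.invFunOn (Phi K) {0}ᶜ) (e.symm : Eu n →L[ℝ] Eu n)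
      (Phi K (r • (x : Eu n))) := by
    refine (hs.to_local_left_inverse ?_).hasFDerivAt
    filter_upwards [isOpen_compl_singleton.mem_nhds hz] with w hw
    exact (Phi_injOn hK).leftInvOn_invFunOn hw
  have hval : Function.invFunOn (Phi K) {0}ᶜ (Phi K (r • (x : Eu n))) = r • (x : Eu n) :=
    (Phi_injOn hK).leftInvOn_invFunOn hz
  have h1 := hinv.norm_sq
  rw [hval] at h1
  have h2 : (2 • (innerSL ℝ (r • (x : Eu n))).comp (e.symm : Eu n →L[ℝ] Eu n) : Eu n →L[ℝ] ℝ)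
      = (2 * r / sfn K x) • innerSL ℝ (x : Eu n) := by
    ext w
    obtain ⟨u, rfl⟩ := e.surjective w
    have h3 : e u = dPhi K x u := by rw [← he]; rfl
    have h4 : ⟪(x : Eu n), dPhi K x u⟫_ℝ = ⟪(x : Eu n), u⟫_ℝ * sfn K x := by
      simp [dPhi, inner_add_right, hess_inner hK _ _ (sph_ne x), inner_smul_right,
        (grad_spec hK _ (sph_ne x)).1]
    have := (hK.pos x).ne'
    have h5 : ⟪(x : Eu n), e u⟫_ℝ = ⟪(x : Eu n), u⟫_ℝ * sfn K x := by rw [h3, h4]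
    simp [h5]
    field_simp
  rw [h2] at h1
  refine h1.congr_of_eventuallyEq ?_
  filter_upwards [isOpen_compl_singleton.mem_nhds (Phi_ne hK x r hr)] with w hw
  rw [Qf, if_neg (show ¬ w = 0 from hw)]

lemma Qf_zero : Qf K (0 : Eu n) = 0 := by rw [Qf, if_pos rfl]

lemma Qf_deriv_zero (hK : IsSmoothConvexBody K) : HasFDerivAt (Qf K) (0 : Eu n →L[ℝ] ℝ) 0 := by
  obtain ⟨C, hC⟩ := exists_bound_sph (fun x : Sph n => (sfn K x ^ 2)⁻¹)
    (((sfn_cont_sph hK).pow 2).inv₀ (fun x => (pow_pos (hK.pos x) 2).ne'))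
  refine hasFDerivAt_zero_of_quad _ C Qf_zero (fun y => ?_)
  by_cases hy : y = 0
  · simp [hy, Qf_zero]
  · obtain ⟨x, r, hr, rfl⟩ := Phi_surj hK y hy
    rw [Qf_Phi hK x r hr, abs_of_pos (by positivity)]
    have h1 := real_inner_le_norm (x : Eu n) (Phi K (r • (x : Eu n)))
    rw [Phi_inner hK x r hr, sph_norm, one_mul] at h1
    have hp := hK.pos x
    have h2 : (r * sfn K x) ^ 2 ≤ ‖Phi K (r • (x : Eu n))‖ ^ 2 := by gcongr
    have h3 : (sfn K x ^ 2)⁻¹ ≤ C := (le_abs_self _).trans (hC x)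
    have hC0 : 0 ≤ C := le_trans (by positivity) h3
    calc r ^ 2 = (sfn K x ^ 2)⁻¹ * (r * sfn K x) ^ 2 := by field_simp
      _ ≤ C * ‖Phi K (r • (x : Eu n))‖ ^ 2 := by gcongr

lemma grad_cont_sph (hK : IsSmoothConvexBody K) :
    Continuous (fun x : Sph n => gradient (sfn K) (x : Eu n)) :=
  cont_sph _ (grad_smooth hK).continuousOn

/-- The identity obtained from the linear vector field `y ↦ ⟨y, c⟩ c`. -/
lemma linear_field (hK : IsSmoothConvexBody K) (hpos : ∀ x : Sph n, 0 < rK K x)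
    (hrc : Continuous (fun x : Sph n => rK K x)) (c : Eu n) :
    ((n : ℝ) + 1) * ∫ x : Sph n, ⟪(x : Eu n), c⟫_ℝ * ⟪gradient (sfn K) (x : Eu n), c⟫_ℝ
        * rK K x ∂sphMeas n
      = ‖c‖ ^ 2 * ∫ x : Sph n, sfn K x * rK K x ∂sphMeas n := by
  have hsc := sfn_cont_sph hK
  have hgc := grad_cont_sph hK
  have hderiv : ∀ (x : Sph n) (r : ℝ), 0 < r → HasFDerivAt (fun y => Real.exp (-Qf K y))
      (Real.exp (-r ^ 2) • (-((2 * r / sfn K x) • innerSL ℝ (x : Eu n)) : Eu n →L[ℝ] ℝ))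
      (Phi K (r • (x : Eu n))) := by
    intro x r hr
    have := (Qf_deriv hK hpos x r hr).fun_neg.exp
    rwa [Qf_Phi hK x r hr] at this
  have hdiff : ∀ y, DifferentiableAt ℝ (fun y => Real.exp (-Qf K y)) y := by
    intro y
    by_cases hy : y = 0
    · rw [hy]
      exact (Qf_deriv_zero hK).fun_neg.exp.differentiableAt
    · obtain ⟨x, r, hr, rfl⟩ := Phi_surj hK y hy
      exact (hderiv x r hr).differentiableAt
  have hlin : ∀ y : Eu n, HasFDerivAt (fun y : Eu n => ⟪c, y⟫_ℝ) (innerSL ℝ c) y := fun y =>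
    (innerSL ℝ c).hasFDerivAt
  have e1 : ∀ x : Sph n, ∀ r : ℝ, 0 < r →
      fderiv ℝ (fun y : Eu n => ⟪c, y⟫_ℝ) (Phi K (r • (x : Eu n))) c
        * Real.exp (-Qf K (Phi K (r • (x : Eu n))))
      = ‖c‖ ^ 2 * (r ^ 0 * Real.exp (-r ^ 2)) := by
    intro x r hr
    rw [(hlin _).fderiv, Qf_Phi hK x r hr]
    simp
  have e2 : ∀ x : Sph n, ∀ r : ℝ, 0 < r →
      ⟪c, Phi K (r • (x : Eu n))⟫_ℝ
        * fderiv ℝ (fun y => Real.exp (-Qf K y)) (Phi K (r • (x : Eu n))) c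
      = (-2 * (⟪(x : Eu n), c⟫_ℝ * ⟪gradient (sfn K) (x : Eu n), c⟫_ℝ / sfn K x))
        * (r ^ 2 * Real.exp (-r ^ 2)) := by
    intro x r hr
    rw [(hderiv x r hr).fderiv, Phi_smul hK x r hr, inner_smul_right,
      real_inner_comm]
    simp
    ring
  have e3 : ∀ x : Sph n, ∀ r : ℝ, 0 < r →
      ⟪c, Phi K (r • (x : Eu n))⟫_ℝ * Real.exp (-Qf K (Phi K (r • (x : Eu n))))
      = ⟪c, gradient (sfn K) (x : Eu n)⟫_ℝ * (r ^ 1 * Real.exp (-r ^ 2)) := by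
    intro x r hr
    rw [Qf_Phi hK x r hr, Phi_smul hK x r hr, inner_smul_right]
    ring
  have A1 := cov_aux hK hpos hrc (fun y => fderiv ℝ (fun y : Eu n => ⟪c, y⟫_ℝ) y c
    * Real.exp (-Qf K y)) _ 0 e1
  have A2 := cov_aux hK hpos hrc (fun y => ⟪c, y⟫_ℝ
    * fderiv ℝ (fun y => Real.exp (-Qf K y)) y c) _ 2 e2
  have A3 := cov_aux hK hpos hrc (fun y => ⟪c, y⟫_ℝ * Real.exp (-Qf K y)) _ 1 e3
  have key := integral_mul_fderiv_eq_neg_fderiv_mul_of_integrable (μ := (volume : Measure (Eu n)))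
    (f := fun y : Eu n => ⟪c, y⟫_ℝ) (g := fun y => Real.exp (-Qf K y)) (v := c)
    (A1.2 continuous_const)
    (A2.2 (continuous_const.mul (Continuous.div
      ((by fun_prop : Continuous fun x : Sph n => ⟪(x : Eu n), c⟫_ℝ).mul
        (hgc.inner continuous_const)) hsc (fun x => (hK.pos x).ne'))))
    (A3.2 (continuous_const.inner hgc))
    (fun y _ => (hlin y).differentiableAt) (fun y _ => hdiff y)
  rw [A1.1, A2.1] at key
  have i2 : ∫ x : Sph n, sfn K x * rK K x *
      (-2 * (⟪(x : Eu n), c⟫_ℝ * ⟪gradient (sfn K) (x : Eu n), c⟫_ℝ / sfn K x)) ∂sphMeas n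
      = -2 * ∫ x : Sph n, ⟪(x : Eu n), c⟫_ℝ * ⟪gradient (sfn K) (x : Eu n), c⟫_ℝ
        * rK K x ∂sphMeas n := by
    rw [← integral_const_mul]
    refine integral_congr_ae (.of_forall fun x => ?_)
    have := (hK.pos x).ne'
    simp only
    field_simp
  rw [i2, integral_mul_const] at key
  have hg := gam_succ n
  have hgp := gam_pos n
  rw [add_zero] at key
  generalize (∫ x : Sph n, ⟪(x : Eu n), c⟫_ℝ * ⟪gradient (sfn K) (x : Eu n), c⟫_ℝ
        * rK K x ∂sphMeas n) = I at key ⊢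
  generalize (∫ x : Sph n, sfn K x * rK K x ∂sphMeas n) = J at key ⊢
  have h5 : gam n * (((n : ℝ) + 1) * I - ‖c‖ ^ 2 * J) = 0 := by
    linear_combination -key - I * hg
  rcases mul_eq_zero.1 h5 with h | h
  · exact absurd h hgp.ne'
  · linarith

end cov

section final
variable {n : ℕ} {K : Set (Eu n)}

lemma sphMeas_integrable (f : Sph n → ℝ) (hf : Continuous f) : Integrable f (sphMeas n) := by
  unfold sphMeas
  exact hf.integrable_of_hasCompactSupport (HasCompactSupport.of_compactSpace f)

/-- The power `|z|^(1-p)`. -/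
def wt (n : ℕ) (p : ℝ) (z : Eu n) : ℝ := (‖z‖ ^ 2) ^ ((1 - p) / 2)

lemma wt_hom (p : ℝ) (z : Eu n) (r : ℝ) (hr : 0 < r) : wt n p (r • z) = r ^ (1 - p) * wt n p z := by
  unfold wt
  rw [norm_smul, Real.norm_of_nonneg hr.le, mul_pow, Real.mul_rpow (by positivity) (by positivity),
    ← Real.rpow_natCast r 2, ← Real.rpow_mul hr.le]
  congr 2
  push_cast
  ring

lemma wt_smooth (p : ℝ) : ContDiffOn ℝ 1 (wt n p) ({0}ᶜ : Set (Eu n)) := by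
  refine ContDiffOn.rpow_const_of_ne (contDiff_norm_sq ℝ).contDiffOn (fun z hz => ?_)
  have : 0 < ‖z‖ := norm_pos_iff.2 hz
  positivity

lemma wt_sph (p : ℝ) (x : Sph n) : wt n p x = 1 := by
  simp [wt]

lemma wt_deriv (p : ℝ) (x : Sph n) :
    HasFDerivAt (wt n p) ((1 - p) • innerSL ℝ (x : Eu n)) x := by
  have h := ((hasStrictFDerivAt_norm_sq (x : Eu n)).hasFDerivAt).rpow_const (p := (1 - p) / 2)
    (Or.inl (by simp))
  have h2 : ((1 - p) / 2 * (‖(x : Eu n)‖ ^ 2) ^ ((1 - p) / 2 - 1)) • (2 • innerSL ℝ (x : Eu n) : Eu n →L[ℝ] ℝ)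
      = (1 - p) • innerSL ℝ (x : Eu n) := by
    ext v
    simp
    ring
  rw [h2] at h
  exact h

lemma sfn_rpow_smooth (hK : IsSmoothConvexBody K) (q : ℝ) :
    ContDiffOn ℝ 1 (fun z => sfn K z ^ q) ({0}ᶜ : Set (Eu n)) :=
  ContDiffOn.rpow_const_of_ne (hK.smooth.of_le (by exact_mod_cast le_top))
    (fun z hz => (sfn_pos hK z hz).ne')

lemma sfn_rpow_cont (hK : IsSmoothConvexBody K) (q : ℝ) :
    Continuous (fun x : Sph n => sfn K (x : Eu n) ^ q) :=
  cont_sph _ (sfn_rpow_smooth hK q).continuousOn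

lemma sfn_rpow_deriv (hK : IsSmoothConvexBody K) (q : ℝ) (x : Sph n) :
    HasFDerivAt (fun z => sfn K z ^ q)
      ((q * sfn K (x : Eu n) ^ (q - 1)) • innerSL ℝ (gradient (sfn K) (x : Eu n))) (x : Eu n) :=
  (sfn_fderiv hK _ (sph_ne x)).rpow_const (Or.inl (hK.pos x).ne')

lemma sfn_rpow_hom (hK : IsSmoothConvexBody K) (q : ℝ) (z : Eu n) (hz : z ≠ 0) (r : ℝ)
    (hr : 0 < r) : sfn K (r • z) ^ q = r ^ q * sfn K z ^ q := by
  rw [sfn_hom hK z r hr, Real.mul_rpow hr.le (sfn_pos hK z hz).le]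

/-- First moment identity. -/
lemma moment_one (hK : IsSmoothConvexBody K) (p : ℝ) (c : Eu n) :
    (p + 1) * ∫ x : Sph n, sfn K (x : Eu n) ^ p * ⟪gradient (sfn K) (x : Eu n), c⟫_ℝ ∂sphMeas n
      = ((n : ℝ) + 1 + p) *
        ∫ x : Sph n, sfn K (x : Eu n) ^ (p + 1) * ⟪(x : Eu n), c⟫_ℝ ∂sphMeas n := by
  have hgc := grad_cont_sph hK
  have h := sphere_div (fun z => wt n p z * sfn K z ^ (p + 1))
    ((wt_smooth p).mul (sfn_rpow_smooth hK (p + 1))) (by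
      intro z r hr
      by_cases hz : z = 0
      · have : wt n p (0 : Eu n) * (0 : ℝ) ^ (p + 1) = 0 := by
          by_cases h1 : p = 1
          · rw [h1, Real.zero_rpow (by norm_num), mul_zero]
          · rw [wt, norm_zero, zero_pow two_ne_zero, Real.zero_rpow, zero_mul]
            intro h2
            apply h1
            linarith
        simp [hz, sfn_zero hK, this]
      · rw [wt_hom p z r hr, sfn_rpow_hom hK _ z hz r hr]
        have : r ^ (1 - p) * r ^ (p + 1) = r ^ 2 := by
          rw [← Real.rpow_add hr, ← Real.rpow_natCast]; congr 1; push_cast; ring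
        rw [← this]; ring) c
  have hd : ∀ x : Sph n, fderiv ℝ (fun z => wt n p z * sfn K z ^ (p + 1)) (x : Eu n) c
      = (1 - p) * (sfn K (x : Eu n) ^ (p + 1) * ⟪(x : Eu n), c⟫_ℝ)
        + (p + 1) * (sfn K (x : Eu n) ^ p * ⟪gradient (sfn K) (x : Eu n), c⟫_ℝ) := by
    intro x
    rw [((wt_deriv p x).fun_mul (sfn_rpow_deriv hK (p + 1) x)).fderiv]
    simp [wt_sph]
    ring
  simp only [hd, wt_sph, one_mul] at h
  have c1 : Integrable (fun x : Sph n => (1 - p) * (sfn K (x : Eu n) ^ (p + 1) * ⟪(x : Eu n), c⟫_ℝ))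
      (sphMeas n) :=
    sphMeas_integrable _ (continuous_const.mul ((sfn_rpow_cont hK _).mul (by fun_prop)))
  have c2 : Integrable (fun x : Sph n => (p + 1) * (sfn K (x : Eu n) ^ p *
      ⟪gradient (sfn K) (x : Eu n), c⟫_ℝ)) (sphMeas n) :=
    sphMeas_integrable _ (continuous_const.mul ((sfn_rpow_cont hK _).mul
      (hgc.inner continuous_const)))
  rw [integral_add c1 c2, integral_const_mul, integral_const_mul] at h
  linarith

/-- Second moment identity. -/
lemma moment_two (hK : IsSmoothConvexBody K) (p : ℝ) (c : Eu n) :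
    p * (∫ x : Sph n, ⟪(x : Eu n), c⟫_ℝ * ⟪gradient (sfn K) (x : Eu n), c⟫_ℝ
        * sfn K (x : Eu n) ^ (p - 1) ∂sphMeas n)
      + ‖c‖ ^ 2 * ∫ x : Sph n, sfn K (x : Eu n) ^ p ∂sphMeas n
      = ((n : ℝ) + 1 + p) *
        ∫ x : Sph n, ⟪(x : Eu n), c⟫_ℝ ^ 2 * sfn K (x : Eu n) ^ p ∂sphMeas n := by
  have hgc := grad_cont_sph hK
  have hx1 : Continuous (fun x : Sph n => ⟪(x : Eu n), c⟫_ℝ) := by fun_prop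
  have h := sphere_div (fun z => (wt n p z * sfn K z ^ p) * ⟪c, z⟫_ℝ)
    (((wt_smooth p).mul (sfn_rpow_smooth hK p)).mul (innerSL ℝ c).contDiff.contDiffOn) (by
      intro z r hr
      by_cases hz : z = 0
      · simp [hz]
      · rw [wt_hom p z r hr, sfn_rpow_hom hK _ z hz r hr, inner_smul_right]
        have : r ^ (1 - p) * r ^ p = r := by
          rw [← Real.rpow_add hr]; simp
        have h2 : r ^ 2 = r ^ (1 - p) * r ^ p * r := by rw [this]; ring
        rw [h2]; ring) c
  have hd : ∀ x : Sph n, fderiv ℝ (fun z => (wt n p z * sfn K z ^ p) * ⟪c, z⟫_ℝ) (x : Eu n) c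
      = ‖c‖ ^ 2 * sfn K (x : Eu n) ^ p
        + ((1 - p) * (⟪(x : Eu n), c⟫_ℝ ^ 2 * sfn K (x : Eu n) ^ p)
        + p * (⟪(x : Eu n), c⟫_ℝ * ⟪gradient (sfn K) (x : Eu n), c⟫_ℝ
        * sfn K (x : Eu n) ^ (p - 1))) := by
    intro x
    have hl : HasFDerivAt (fun z : Eu n => ⟪c, z⟫_ℝ) (innerSL ℝ c) (x : Eu n) :=
      (innerSL ℝ c).hasFDerivAt
    rw [(((wt_deriv p x).fun_mul (sfn_rpow_deriv hK p x)).fun_mul hl).fderiv]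
    simp [wt_sph, real_inner_comm c]
    ring
  have hF : ∀ x : Sph n, wt n p x * sfn K (x : Eu n) ^ p * ⟪c, (x : Eu n)⟫_ℝ * ⟪(x : Eu n), c⟫_ℝ
      = ⟪(x : Eu n), c⟫_ℝ ^ 2 * sfn K (x : Eu n) ^ p := by
    intro x
    rw [wt_sph, real_inner_comm c]; ring
  simp only [hd, hF] at h
  have c1 : Integrable (fun x : Sph n => ‖c‖ ^ 2 * sfn K (x : Eu n) ^ p) (sphMeas n) :=
    sphMeas_integrable _ (continuous_const.mul (sfn_rpow_cont hK p))
  have c2 : Integrable (fun x : Sph n => (1 - p) * (⟪(x : Eu n), c⟫_ℝ ^ 2 * sfn K (x : Eu n) ^ p))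
      (sphMeas n) :=
    sphMeas_integrable _ (continuous_const.mul ((hx1.pow 2).mul (sfn_rpow_cont hK p)))
  have c3 : Integrable (fun x : Sph n => p * (⟪(x : Eu n), c⟫_ℝ *
      ⟪gradient (sfn K) (x : Eu n), c⟫_ℝ * sfn K (x : Eu n) ^ (p - 1))) (sphMeas n) :=
    sphMeas_integrable _ (continuous_const.mul ((hx1.mul
      (hgc.inner continuous_const)).mul (sfn_rpow_cont hK (p - 1))))
  have c23 : Integrable (fun x : Sph n => (1 - p) * (⟪(x : Eu n), c⟫_ℝ ^ 2 * sfn K (x : Eu n) ^ p)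
      + p * (⟪(x : Eu n), c⟫_ℝ * ⟪gradient (sfn K) (x : Eu n), c⟫_ℝ
        * sfn K (x : Eu n) ^ (p - 1))) (sphMeas n) := c2.add c3
  rw [integral_add c1 c23, integral_add c2 c3, integral_const_mul, integral_const_mul,
    integral_const_mul] at h
  linarith

lemma mass_pos (hK : IsSmoothConvexBody K) (p : ℝ) :
    0 < ∫ x : Sph n, sfn K (x : Eu n) ^ p ∂sphMeas n := by
  have hne : Nonempty (Sph n) := by
    obtain ⟨z, hz⟩ := exists_ne (0 : Eu n)
    exact ⟨(exists_sph z hz).choose⟩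
  obtain ⟨x₀⟩ := hne
  unfold sphMeas
  exact (sfn_rpow_cont hK p).integral_pos_of_hasCompactSupport_nonneg_nonzero
    (HasCompactSupport.of_compactSpace _) (fun x => (Real.rpow_pos_of_pos (hK.pos x) p).le)
    (x := x₀) (Real.rpow_pos_of_pos (hK.pos x₀) p).ne'

lemma int5 {n : ℕ} (f1 f2 f3 f4 f5 : Sph n → ℝ) (h1 : Integrable f1 (sphMeas n))
    (h2 : Integrable f2 (sphMeas n)) (h3 : Integrable f3 (sphMeas n))
    (h4 : Integrable f4 (sphMeas n)) (h5 : Integrable f5 (sphMeas n)) :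
    ∫ x, (f1 x + f2 x - f3 x - f4 x + f5 x) ∂sphMeas n
      = (∫ x, f1 x ∂sphMeas n) + (∫ x, f2 x ∂sphMeas n) - (∫ x, f3 x ∂sphMeas n)
        - (∫ x, f4 x ∂sphMeas n) + (∫ x, f5 x ∂sphMeas n) := by
  have d1 : Integrable (fun x => f1 x + f2 x) (sphMeas n) := h1.add h2
  have d2 : Integrable (fun x => f1 x + f2 x - f3 x) (sphMeas n) := d1.sub h3
  have d3 : Integrable (fun x => f1 x + f2 x - f3 x - f4 x) (sphMeas n) := d2.sub h4
  rw [integral_add d3 h5, integral_sub d2 h4, integral_sub d1 h3, integral_add h1 h2]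

end final

/-- If `dV = h^p dθ` with `p > −n−1`, then
`∫ |∇̄h|² dV = ∫ |∇̄h̃|² dV + n(n+1−p)|c|²/((n+1)(n+1+p)) ∫ dV`,
where `|∇̄h|² = |∇h_K|² − h²` and `|∇̄h̃|² = |∇h_K − c|² − h̃²` on `S^n`. -/
theorem gradient_splitting (n : ℕ) (hn : 1 ≤ n) (p : ℝ) (hp : -((n : ℝ) + 1) < p)
    (K : Set (Eu n)) (hK : IsSmoothConvexBody K)
    (heq : ∀ x : Sph n, rK K (x : Eu n) = sfn K (x : Eu n) ^ (p - 1))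
    (c : Eu n)
    (hc : c = (∫ x : Sph n, sfn K (x : Eu n) ^ p ∂sphMeas n)⁻¹ •
        ∫ x : Sph n, sfn K (x : Eu n) ^ p • gradient (sfn K) (x : Eu n) ∂sphMeas n) :
    ∫ x : Sph n, (‖gradient (sfn K) (x : Eu n)‖ ^ 2 - sfn K (x : Eu n) ^ 2) *
        sfn K (x : Eu n) ^ p ∂sphMeas n =
      (∫ x : Sph n, (‖gradient (sfn K) (x : Eu n) - c‖ ^ 2 -
          (sfn K (x : Eu n) - ⟪(x : Eu n), c⟫_ℝ) ^ 2) * sfn K (x : Eu n) ^ p ∂sphMeas n) +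
        (n : ℝ) * ((n : ℝ) + 1 - p) * ‖c‖ ^ 2 / (((n : ℝ) + 1) * ((n : ℝ) + 1 + p)) *
          ∫ x : Sph n, sfn K (x : Eu n) ^ p ∂sphMeas n := by
  have hgc := grad_cont_sph hK
  have hsc := sfn_cont_sph hK
  have hx1 : Continuous (fun x : Sph n => ⟪(x : Eu n), c⟫_ℝ) := by fun_prop
  have hpc := sfn_rpow_cont hK p
  have hpos : ∀ x : Sph n, 0 < rK K (x : Eu n) := fun x => by
    rw [heq]; exact Real.rpow_pos_of_pos (hK.pos x) _
  have hrc : Continuous (fun x : Sph n => rK K (x : Eu n)) := by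
    simp only [heq]; exact sfn_rpow_cont hK _
  have hlf := linear_field hK hpos hrc c
  have m1 := moment_one hK p c
  have m2 := moment_two hK p c
  have hM := mass_pos hK p
  have hmul : ∀ x : Sph n, sfn K (x : Eu n) * sfn K (x : Eu n) ^ (p - 1) = sfn K (x : Eu n) ^ p := by
    intro x
    have := (hK.pos x).ne'
    rw [Real.rpow_sub_one this]
    field_simp
  have hmul1 : ∀ x : Sph n, sfn K (x : Eu n) ^ (p + 1) = sfn K (x : Eu n) ^ p * sfn K (x : Eu n) :=
    fun x => Real.rpow_add_one (hK.pos x).ne' p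
  simp only [heq, hmul] at hlf
  -- the mean of the gradient
  have hvI : Integrable (fun x : Sph n => sfn K (x : Eu n) ^ p • gradient (sfn K) (x : Eu n))
      (sphMeas n) := by
    unfold sphMeas
    exact (hpc.smul hgc).integrable_of_hasCompactSupport (HasCompactSupport.of_compactSpace _)
  have hT : ∫ x : Sph n, sfn K (x : Eu n) ^ p * ⟪gradient (sfn K) (x : Eu n), c⟫_ℝ ∂sphMeas n
      = ‖c‖ ^ 2 * ∫ x : Sph n, sfn K (x : Eu n) ^ p ∂sphMeas n := by
    have h1 : (∫ x : Sph n, sfn K (x : Eu n) ^ p ∂sphMeas n) • c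
        = ∫ x : Sph n, sfn K (x : Eu n) ^ p • gradient (sfn K) (x : Eu n) ∂sphMeas n := by
      conv_lhs => rw [hc]
      rw [smul_inv_smul₀ hM.ne']
    have h2 := integral_inner (𝕜 := ℝ) hvI c
    rw [← h1, inner_smul_right, real_inner_self_eq_norm_sq] at h2
    rw [mul_comm, ← h2]
    refine integral_congr_ae (.of_forall fun x => ?_)
    simp only
    rw [inner_smul_right, real_inner_comm]
  -- the pointwise expansion
  have b1 : Integrable (fun x : Sph n => (‖gradient (sfn K) (x : Eu n) - c‖ ^ 2 -
          (sfn K (x : Eu n) - ⟪(x : Eu n), c⟫_ℝ) ^ 2) * sfn K (x : Eu n) ^ p) (sphMeas n) :=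
    sphMeas_integrable _
      ((((hgc.sub continuous_const).norm.pow 2).sub ((hsc.sub hx1).pow 2)).mul hpc)
  have b2 : Integrable (fun x : Sph n => 2 * (sfn K (x : Eu n) ^ p *
      ⟪gradient (sfn K) (x : Eu n), c⟫_ℝ)) (sphMeas n) :=
    sphMeas_integrable _ (continuous_const.mul (hpc.mul (hgc.inner continuous_const)))
  have b3 : Integrable (fun x : Sph n => ‖c‖ ^ 2 * sfn K (x : Eu n) ^ p) (sphMeas n) :=
    sphMeas_integrable _ (continuous_const.mul hpc)
  have b4 : Integrable (fun x : Sph n => 2 * (sfn K (x : Eu n) ^ (p + 1) * ⟪(x : Eu n), c⟫_ℝ))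
      (sphMeas n) :=
    sphMeas_integrable _ (continuous_const.mul ((sfn_rpow_cont hK _).mul hx1))
  have b5 : Integrable (fun x : Sph n => ⟪(x : Eu n), c⟫_ℝ ^ 2 * sfn K (x : Eu n) ^ p)
      (sphMeas n) := sphMeas_integrable _ ((hx1.pow 2).mul hpc)
  have hexp : ∀ x : Sph n, (‖gradient (sfn K) (x : Eu n)‖ ^ 2 - sfn K (x : Eu n) ^ 2) *
        sfn K (x : Eu n) ^ p =
      ((((‖gradient (sfn K) (x : Eu n) - c‖ ^ 2 -
          (sfn K (x : Eu n) - ⟪(x : Eu n), c⟫_ℝ) ^ 2) * sfn K (x : Eu n) ^ p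
        + 2 * (sfn K (x : Eu n) ^ p * ⟪gradient (sfn K) (x : Eu n), c⟫_ℝ))
        - ‖c‖ ^ 2 * sfn K (x : Eu n) ^ p)
        - 2 * (sfn K (x : Eu n) ^ (p + 1) * ⟪(x : Eu n), c⟫_ℝ))
        + ⟪(x : Eu n), c⟫_ℝ ^ 2 * sfn K (x : Eu n) ^ p := by
    intro x
    rw [hmul1, norm_sub_sq_real]
    ring
  simp only [hexp]
  rw [int5 _ _ _ _ _ b1 b2 b3 b4 b5, integral_const_mul, integral_const_mul,
    integral_const_mul, hT]
  rw [hT] at m1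
  generalize (∫ x : Sph n, sfn K (x : Eu n) ^ p ∂sphMeas n) = M at *
  generalize (∫ x : Sph n, ⟪(x : Eu n), c⟫_ℝ * ⟪gradient (sfn K) (x : Eu n), c⟫_ℝ
        * sfn K (x : Eu n) ^ (p - 1) ∂sphMeas n) = R at *
  generalize (∫ x : Sph n, sfn K (x : Eu n) ^ (p + 1) * ⟪(x : Eu n), c⟫_ℝ ∂sphMeas n) = S1 at *
  generalize (∫ x : Sph n, ⟪(x : Eu n), c⟫_ℝ ^ 2 * sfn K (x : Eu n) ^ p ∂sphMeas n) = S2 at *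
  have hn1 : (n : ℝ) + 1 ≠ 0 := by positivity
  have hn2 : (n : ℝ) + 1 + p ≠ 0 := by
    have : 0 < (n : ℝ) + 1 + p := by linarith
    exact this.ne'
  have hS1 : S1 = (p + 1) * (‖c‖ ^ 2 * M) / ((n : ℝ) + 1 + p) := by
    rw [eq_div_iff hn2]; linarith
  have hR : R = ‖c‖ ^ 2 * M / ((n : ℝ) + 1) := by
    rw [eq_div_iff hn1]; linarith
  have hS2 : S2 = ‖c‖ ^ 2 * M / ((n : ℝ) + 1) := by
    have : ((n : ℝ) + 1 + p) * S2 = ((n : ℝ) + 1 + p) * (‖c‖ ^ 2 * M / ((n : ℝ) + 1)) := by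
      rw [← m2, hR]; field_simp; ring
    exact mul_left_cancel₀ hn2 this
  rw [hS1, hS2]
  field_simp
  ring
end
end

section
/- Let n ≥ 1, let p be a real number with p ≠ −(n+1), and let H : ℝ^{n+1}\{0} → ℝ be a C^∞, positively 1-homogeneous function that is positive on the unit sphere S^n. Then ∫_{S^n} x·H(x)^{p+1} dθ(x) = ((p+1)/(n+p+1))·∫_{S^n} ∇H(x)·H(x)^p dθ(x), as an identity of vectors in ℝ^{n+1} (where ∇H is the Euclidean gradient). -/
open MeasureTheory Metric Real
open scoped InnerProductSpace ENNReal Topology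

noncomputable section

open Set in
theorem polar_prod (n : ℕ) (a : ℝ → ℝ) (k : Eu n → ℝ) :
    ∫ x : Eu n, a ‖x‖ * k (‖x‖⁻¹ • x) =
      (∫ r in Ioi (0:ℝ), r ^ n * a r) * ∫ u : Sph n, k u ∂sphMeas n := by
  have hd : Module.finrank ℝ (Eu n) - 1 = n := by simp
  calc
    ∫ x : Eu n, a ‖x‖ * k (‖x‖⁻¹ • x)
      = ∫ x : ({(0 : Eu n)}ᶜ : Set (Eu n)), a ‖x.1‖ * k (‖x.1‖⁻¹ • x.1)
          ∂((volume : Measure (Eu n)).comap (↑)) := by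
      rw [integral_subtype_comap (measurableSet_singleton _).compl
        fun x : Eu n ↦ a ‖x‖ * k (‖x‖⁻¹ • x), restrict_compl_singleton]
    _ = ∫ z, k (z.1 : Eu n) * a z.2 ∂(sphMeas n).prod (.volumeIoiPow n) := by
      have := (volume : Measure (Eu n)).measurePreserving_homeomorphUnitSphereProd.integral_comp
        (Homeomorph.measurableEmbedding _) (fun z => k (z.1 : Eu n) * a z.2)
      rw [hd] at this
      rw [sphMeas, ← this]
      simp [mul_comm]
    _ = (∫ u : Sph n, k u ∂sphMeas n) * ∫ x : Ioi (0 : ℝ), a x ∂.volumeIoiPow n := by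
      have : SFinite (sphMeas n) := by unfold sphMeas; infer_instance
      exact integral_prod_mul (fun u : Sph n => k u) (fun r : Ioi (0:ℝ) => a r)
    _ = _ := by
      rw [mul_comm]
      congr 1
      simp only [Measure.volumeIoiPow, ENNReal.ofReal]
      rw [integral_withDensity_eq_integral_smul,
        integral_subtype_comap measurableSet_Ioi fun r ↦ Real.toNNReal (r ^ n) • a r,
        setIntegral_congr_fun measurableSet_Ioi fun x hx ↦ ?_]
      · rw [NNReal.smul_def, Real.coe_toNNReal _ (pow_nonneg hx.out.le _), smul_eq_mul]
      · exact (measurable_subtype_coe.pow_const _).real_toNNReal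

theorem integrable_annulus (n : ℕ) (a : ℝ → ℝ) (ha : Continuous a)
    (ha0 : ∀ r, r ∉ Set.Icc (1:ℝ) 3 → a r = 0) (k : Eu n → ℝ) (hk : ContinuousOn k {0}ᶜ) :
    Integrable (fun x => a ‖x‖ * k x) := by
  set K : Set (Eu n) := {x | ‖x‖ ∈ Set.Icc (1:ℝ) 3} with hK
  have hKc : IsCompact K := by
    refine Metric.isCompact_of_isClosed_isBounded (isClosed_Icc.preimage continuous_norm) ?_
    refine (Metric.isBounded_closedBall (x := (0 : Eu n)) (r := 3)).subset ?_
    intro x hx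
    simpa using hx.2
  have hc : ContinuousOn (fun x => a ‖x‖ * k x) K := by
    refine (ha.comp continuous_norm).continuousOn.mul (hk.mono ?_)
    rintro x hx rfl
    have := hx.1
    simp at this
    linarith
  refine (integrableOn_iff_integrable_of_support_subset (s := K) ?_).1 (hc.integrableOn_compact hKc)
  intro x hx
  by_contra h
  exact hx (by simp [ha0 _ h])

/-- a radial bump -/
def chiB : ContDiffBump (2 : ℝ) := ⟨1/2, 1, by norm_num, by norm_num⟩

theorem chi_zero {r : ℝ} (hr : r ∉ Set.Ioo (1:ℝ) 3) : chiB r = 0 := by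
  refine chiB.zero_of_le_dist ?_
  simp only [chiB, Real.dist_eq]
  by_contra h
  push Not at h
  rw [abs_lt] at h
  exact hr ⟨by linarith, by linarith⟩

theorem chi_pos {r : ℝ} (hr : r ∈ Set.Ioo (1:ℝ) 3) : 0 < chiB r := by
  refine chiB.pos_of_mem_ball ?_
  simp only [chiB, Metric.mem_ball, Real.dist_eq, abs_lt]
  constructor <;> linarith [hr.1, hr.2]

theorem chi_smooth : ContDiff ℝ 1 (chiB : ℝ → ℝ) := chiB.contDiff

theorem chi_ev {r : ℝ} (hr : r ∉ Set.Icc (1:ℝ) 3) : (chiB : ℝ → ℝ) =ᶠ[𝓝 r] fun _ => 0 := by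
  filter_upwards [isClosed_Icc.isOpen_compl.mem_nhds hr] with y hy
  exact chi_zero fun h => hy (Set.Ioo_subset_Icc_self h)

theorem dchi_zero {r : ℝ} (hr : r ∉ Set.Icc (1:ℝ) 3) : deriv chiB r = 0 := by
  rw [(chi_ev hr).deriv_eq]; simp

theorem dchi_cont : Continuous (deriv chiB) := chi_smooth.continuous_deriv le_rfl

theorem ioi_to_interval (f : ℝ → ℝ) (hf : ∀ r, r ∉ Set.Icc (1:ℝ) 3 → f r = 0) :
    ∫ r in Set.Ioi (0:ℝ), f r = ∫ r in (1:ℝ)..3, f r := by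
  rw [intervalIntegral.integral_of_le (by norm_num), ← integral_Icc_eq_integral_Ioc]
  refine setIntegral_eq_of_subset_of_forall_sdiff_eq_zero measurableSet_Ioi ?_ ?_
  · intro x hx
    exact lt_of_lt_of_le one_pos hx.1
  · intro x hx
    exact hf x hx.2

theorem radial (n : ℕ) (p : ℝ) :
    (∫ r in Set.Ioi (0:ℝ), r ^ n * (deriv chiB r * r ^ (p + 1))) =
      - ((n + p + 1) * ∫ r in Set.Ioi (0:ℝ), r ^ n * (chiB r * r ^ p)) := by
  rw [ioi_to_interval _ (fun r hr => by simp [dchi_zero hr]),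
    ioi_to_interval _ (fun r hr => by simp [(chi_ev hr).eq_of_nhds])]
  have hpos : ∀ r ∈ Set.uIcc (1:ℝ) 3, 0 < r := fun r hr => by
    rw [Set.uIcc_of_le (by norm_num)] at hr
    exact lt_of_lt_of_le one_pos hr.1
  have := intervalIntegral.integral_mul_deriv_eq_deriv_mul (a := 1) (b := 3)
    (u := chiB) (u' := deriv chiB) (v := fun r => r ^ ((n:ℝ) + p + 1))
    (v' := fun r => ((n:ℝ) + p + 1) * r ^ ((n:ℝ) + p))
    (fun r _ => (chi_smooth.differentiable one_ne_zero r).hasDerivAt)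
    (fun r hr => by
      have := Real.hasDerivAt_rpow_const (x := r) (p := (n:ℝ) + p + 1) (Or.inl (hpos r hr).ne')
      simpa using this)
    (dchi_cont.intervalIntegrable _ _)
    (ContinuousOn.intervalIntegrable (continuousOn_const.mul
      (continuousOn_id.rpow_const fun r hr => Or.inl (hpos r hr).ne')))
  rw [chi_zero (r := 1) (by simp), chi_zero (r := 3) (by simp)] at this
  rw [← intervalIntegral.integral_const_mul]
  have e1 : ∫ r in (1:ℝ)..3, r ^ n * (deriv chiB r * r ^ (p + 1)) =
      ∫ r in (1:ℝ)..3, deriv chiB r * r ^ ((n:ℝ) + p + 1) :=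
    intervalIntegral.integral_congr fun r hr => by
      rw [add_assoc, Real.rpow_add (hpos r hr) (n : ℝ) (p + 1), Real.rpow_natCast]; ring
  have e2 : ∫ r in (1:ℝ)..3, ((n:ℝ) + p + 1) * (r ^ n * (chiB r * r ^ p)) =
      ∫ r in (1:ℝ)..3, chiB r * (((n:ℝ) + p + 1) * r ^ ((n:ℝ) + p)) :=
    intervalIntegral.integral_congr fun r hr => by
      rw [Real.rpow_add (hpos r hr), Real.rpow_natCast]; ring
  rw [e1, e2, this]; ring

theorem radial_pos (n : ℕ) (p : ℝ) :
    0 < ∫ r in Set.Ioi (0:ℝ), r ^ n * (chiB r * r ^ p) := by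
  rw [ioi_to_interval _ (fun r hr => by simp [(chi_ev hr).eq_of_nhds])]
  refine intervalIntegral.intervalIntegral_pos_of_pos_on ?_ ?_ (by norm_num)
  · refine ContinuousOn.intervalIntegrable ?_
    refine (continuousOn_id.pow n).mul (chi_smooth.continuous.continuousOn.mul
      (continuousOn_id.rpow_const fun r hr => Or.inl ?_))
    rw [Set.uIcc_of_le (by norm_num)] at hr
    exact (lt_of_lt_of_le one_pos hr.1).ne'
  · intro r hr
    have h1 := chi_pos hr
    have : 0 < r := one_pos.trans hr.1
    positivity

theorem norm_fderiv {n : ℕ} {x : Eu n} (hx : x ≠ 0) :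
    HasFDerivAt (fun x : Eu n => ‖x‖) (‖x‖⁻¹ • innerSL ℝ x) x := by
  have h := (hasStrictFDerivAt_norm_sq x).hasFDerivAt.sqrt (by simpa using hx)
  simp only [Real.sqrt_sq (norm_nonneg _)] at h
  refine h.congr_fderiv ?_
  have : ‖x‖ ≠ 0 := by simpa using hx
  ext v
  simp
  field_simp

theorem H_diff {n : ℕ} {H : Eu n → ℝ}
    (hsmooth : ContDiffOn ℝ (⊤ : ℕ∞) H {(0 : Eu n)}ᶜ)
    {x : Eu n} (hx : x ≠ 0) : DifferentiableAt ℝ H x :=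
  ((hsmooth.contDiffAt (isOpen_compl_singleton.mem_nhds hx)).differentiableAt (by simp))

theorem dH_cont {n : ℕ} {H : Eu n → ℝ}
    (hsmooth : ContDiffOn ℝ (⊤ : ℕ∞) H {(0 : Eu n)}ᶜ)
    : ContinuousOn (fderiv ℝ H) {0}ᶜ :=
  hsmooth.continuousOn_fderiv_of_isOpen isOpen_compl_singleton (by simp)


theorem H_fderiv {n : ℕ} {H : Eu n → ℝ}
    (hsmooth : ContDiffOn ℝ (⊤ : ℕ∞) H {(0 : Eu n)}ᶜ)
    (hhom : ∀ z : Eu n, z ≠ 0 → ∀ t : ℝ, 0 < t → H (t • z) = t * H z)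
    {x : Eu n} (hx : x ≠ 0) :
    fderiv ℝ H x = fderiv ℝ H (‖x‖⁻¹ • x) := by
  have hr : 0 < ‖x‖ := norm_pos_iff.2 hx
  have hu : ‖x‖⁻¹ • x ≠ 0 := smul_ne_zero (inv_ne_zero hr.ne') hx
  have h1 := (H_diff hsmooth hu).hasFDerivAt
  have h2 : HasFDerivAt (fun y : Eu n => ‖x‖⁻¹ • y) (‖x‖⁻¹ • ContinuousLinearMap.id ℝ (Eu n)) x :=
    (hasFDerivAt_id (𝕜 := ℝ) x).const_smul ‖x‖⁻¹
  have h3 := (h1.comp x h2).const_mul ‖x‖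
  have h4 : H =ᶠ[𝓝 x] fun y => ‖x‖ * (H ∘ fun y => ‖x‖⁻¹ • y) y := by
    filter_upwards [isOpen_compl_singleton.mem_nhds hx] with y hy
    simp only [Function.comp]
    rw [hhom y hy _ (inv_pos.2 hr), mul_inv_cancel_left₀ hr.ne']
  rw [(h3.congr_of_eventuallyEq h4).fderiv]
  ext v
  simp [hr.ne']

theorem H_norm {n : ℕ} {H : Eu n → ℝ}
    (hhom : ∀ z : Eu n, z ≠ 0 → ∀ t : ℝ, 0 < t → H (t • z) = t * H z)
    {x : Eu n} (hx : x ≠ 0) : H x = ‖x‖ * H (‖x‖⁻¹ • x) := by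
  have hr : 0 < ‖x‖ := norm_pos_iff.2 hx
  rw [hhom x hx _ (inv_pos.2 hr), mul_inv_cancel_left₀ hr.ne']

theorem H_pos_u {n : ℕ} {H : Eu n → ℝ}
    (hpos : ∀ x : Sph n, 0 < H (x : Eu n))
    {x : Eu n} (hx : x ≠ 0) : 0 < H (‖x‖⁻¹ • x) :=
  hpos ⟨‖x‖⁻¹ • x, by simp [norm_smul, hx]⟩

theorem H_pos {n : ℕ} {H : Eu n → ℝ}
    (hhom : ∀ z : Eu n, z ≠ 0 → ∀ t : ℝ, 0 < t → H (t • z) = t * H z)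
    (hpos : ∀ x : Sph n, 0 < H (x : Eu n))
    {x : Eu n} (hx : x ≠ 0) : 0 < H x := by
  rw [H_norm hhom hx]
  exact mul_pos (norm_pos_iff.2 hx) (H_pos_u hpos hx)

theorem key {n : ℕ} {H : Eu n → ℝ}
    (hsmooth : ContDiffOn ℝ (⊤ : ℕ∞) H {(0 : Eu n)}ᶜ)
    (hhom : ∀ z : Eu n, z ≠ 0 → ∀ t : ℝ, 0 < t → H (t • z) = t * H z)
    (hpos : ∀ x : Sph n, 0 < H (x : Eu n))
    (p : ℝ) (v : Eu n) :
    (n + p + 1) * ∫ u : Sph n, H (u : Eu n) ^ (p + 1) * ⟪(u : Eu n), v⟫_ℝ ∂sphMeas n =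
    (p + 1) * ∫ u : Sph n, H (u : Eu n) ^ p * fderiv ℝ H u v ∂sphMeas n := by
  have hHc : ContinuousOn H {(0 : Eu n)}ᶜ := hsmooth.continuousOn
  have hHp : ∀ q : ℝ, ContinuousOn (fun x => H x ^ q) {(0 : Eu n)}ᶜ := fun q =>
    hHc.rpow_const fun x hx => Or.inl (H_pos hhom hpos hx).ne'
  have hg : ∀ x : Eu n, x ≠ 0 → HasFDerivAt (fun x => H x ^ (p + 1))
      (((p + 1) * H x ^ p) • fderiv ℝ H x) x := fun x hx => by
    have := (H_diff hsmooth hx).hasFDerivAt.rpow_const (p := p + 1)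
      (Or.inl (H_pos hhom hpos hx).ne')
    simpa using this
  have hf : ∀ x : Eu n, x ≠ 0 → HasFDerivAt (fun x : Eu n => chiB ‖x‖)
      (deriv chiB ‖x‖ • (‖x‖⁻¹ • innerSL ℝ x)) x := fun x hx =>
    HasDerivAt.comp_hasFDerivAt (h₂ := (chiB : ℝ → ℝ)) x
      (chi_smooth.differentiable one_ne_zero ‖x‖).hasDerivAt (norm_fderiv hx)
  have hf00 : (fun x : Eu n => chiB ‖x‖) =ᶠ[𝓝 0] fun _ => 0 := by
    have : Filter.Tendsto (fun x : Eu n => ‖x‖) (𝓝 0) (𝓝 0) := by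
      simpa using (continuous_norm (E := Eu n)).tendsto 0
    exact this.eventually (chi_ev (r := 0) (by simp))
  have hf0 : HasFDerivAt (fun x : Eu n => chiB ‖x‖) 0 0 :=
    (hasFDerivAt_const (𝕜 := ℝ) (0:ℝ) (0 : Eu n)).congr_of_eventuallyEq hf00
  have hc0 : chiB (0:ℝ) = 0 := chi_zero (by simp)
  have hdc0 : deriv chiB (0:ℝ) = 0 := dchi_zero (by simp)
  have eL : ∀ x : Eu n, chiB ‖x‖ * fderiv ℝ (fun x => H x ^ (p + 1)) x v =
      chiB ‖x‖ * ((p + 1) * (H x ^ p * fderiv ℝ H x v)) := fun x => by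
    by_cases hx : x = 0
    · simp [hx, hc0]
    · rw [(hg x hx).fderiv]; simp; ring_nf; simp
  have eR : ∀ x : Eu n, fderiv ℝ (fun x : Eu n => chiB ‖x‖) x v * H x ^ (p + 1) =
      deriv chiB ‖x‖ * (‖x‖⁻¹ * ⟪x, v⟫_ℝ * H x ^ (p + 1)) := fun x => by
    by_cases hx : x = 0
    · subst hx; rw [hf0.fderiv]; simp
    · rw [(hf x hx).fderiv]; simp; ring
  have ibp := integral_mul_fderiv_eq_neg_fderiv_mul_of_integrable (μ := (volume : Measure (Eu n)))
    (f := fun x : Eu n => chiB ‖x‖) (g := fun x => H x ^ (p + 1)) (v := v)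
    (by
      simp only [eR]
      refine integrable_annulus n _ dchi_cont (fun r hr => dchi_zero hr) _ ?_
      refine ContinuousOn.mul (ContinuousOn.mul ?_ (by fun_prop)) (hHp _)
      exact continuous_norm.continuousOn.inv₀ fun x hx => by simpa using hx)
    (by
      simp only [eL]
      refine integrable_annulus n _ chi_smooth.continuous (fun r hr => (chi_ev hr).eq_of_nhds) _ ?_
      exact continuousOn_const.mul ((hHp _).mul ((dH_cont hsmooth).clm_apply continuousOn_const)))
    (integrable_annulus n _ chi_smooth.continuous (fun r hr => (chi_ev hr).eq_of_nhds) _ (hHp _))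
    (fun x _ => by
      by_cases hx : x = 0
      · subst hx; exact hf0.differentiableAt
      · exact (hf x hx).differentiableAt)
    (fun x hx => by
      refine (hg x ?_).differentiableAt
      rintro rfl
      exact (notMem_tsupport_iff_eventuallyEq.2 hf00) hx)
  simp only [eL, eR] at ibp
  have p1 := polar_prod n (fun r => chiB r * r ^ p) (fun u => (p + 1) * (H u ^ p * fderiv ℝ H u v))
  have p2 := polar_prod n (fun r => deriv chiB r * r ^ (p + 1)) (fun u => H u ^ (p + 1) * ⟪u, v⟫_ℝ)
  have q1 : ∫ x : Eu n, chiB ‖x‖ * ((p + 1) * (H x ^ p * fderiv ℝ H x v)) =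
      ∫ x : Eu n, (chiB ‖x‖ * ‖x‖ ^ p) * ((p + 1) * (H (‖x‖⁻¹ • x) ^ p *
        fderiv ℝ H (‖x‖⁻¹ • x) v)) := by
    congr 1; ext x
    by_cases hx : x = 0
    · simp [hx, hc0]
    · rw [← H_fderiv hsmooth hhom hx, H_norm hhom hx,
        Real.mul_rpow (norm_nonneg _) (H_pos_u hpos hx).le]; ring
  have q2 : ∫ x : Eu n, deriv chiB ‖x‖ * (‖x‖⁻¹ * ⟪x, v⟫_ℝ * H x ^ (p + 1)) =
      ∫ x : Eu n, (deriv chiB ‖x‖ * ‖x‖ ^ (p + 1)) * (H (‖x‖⁻¹ • x) ^ (p + 1) *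
        ⟪‖x‖⁻¹ • x, v⟫_ℝ) := by
    congr 1; ext x
    by_cases hx : x = 0
    · simp [hx, hdc0]
    · rw [H_norm hhom hx, inner_smul_left,
        Real.mul_rpow (norm_nonneg _) (H_pos_u hpos hx).le]; simp; ring
  rw [q1, q2, p1, p2, radial, integral_const_mul] at ibp
  refine mul_left_cancel₀ (radial_pos n p).ne' ?_
  linarith

/-- For a positive, 1-homogeneous, smooth function `H` and `p ≠ −(n+1)`:
`∫_{S^n} H^{p+1} x dθ = ((p+1)/(n+p+1)) ∫_{S^n} H^p ∇H dθ`. -/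
theorem moment_identity (n : ℕ) (hn : 1 ≤ n) (p : ℝ) (hp : p ≠ -((n : ℝ) + 1))
    (H : Eu n → ℝ) (hsmooth : ContDiffOn ℝ (⊤ : ℕ∞) H {(0 : Eu n)}ᶜ)
    (hhom : ∀ z : Eu n, z ≠ 0 → ∀ t : ℝ, 0 < t → H (t • z) = t * H z)
    (hpos : ∀ x : Sph n, 0 < H (x : Eu n)) :
    ∫ x : Sph n, H (x : Eu n) ^ (p + 1) • (x : Eu n) ∂sphMeas n =
      ((p + 1) / ((n : ℝ) + p + 1)) •
        ∫ x : Sph n, H (x : Eu n) ^ p • gradient H (x : Eu n) ∂sphMeas n := by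

  have hHc : Continuous fun x : Sph n => H x := hsmooth.continuousOn.comp_continuous
    continuous_subtype_val fun x => ne_zero_of_mem_unit_sphere x
  have hHp : ∀ q : ℝ, Continuous fun x : Sph n => H x ^ q := fun q =>
    hHc.rpow_const fun x => Or.inl (hpos x).ne'
  have hdc : Continuous fun x : Sph n => gradient H x :=
    (InnerProductSpace.toDual ℝ (Eu n)).symm.continuous.comp
      ((dH_cont hsmooth).comp_continuous
        continuous_subtype_val fun x => ne_zero_of_mem_unit_sphere x)
  have : IsFiniteMeasure (sphMeas n) := by unfold sphMeas; infer_instance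
  have hint : ∀ F : Sph n → Eu n, Continuous F → Integrable F (sphMeas n) := fun F hF =>
    hF.integrable_of_hasCompactSupport (HasCompactSupport.of_compactSpace F)
  have hs : (n : ℝ) + p + 1 ≠ 0 := fun h => hp (by linarith)
  refine ext_inner_left ℝ fun v => ?_
  rw [inner_smul_right, ← integral_inner (hint (fun x : Sph n => H (x : Eu n) ^ (p + 1) • (x : Eu n))
      ((hHp _).smul continuous_subtype_val)),
    ← integral_inner (hint (fun x : Sph n => H (x : Eu n) ^ p • gradient H (x : Eu n))
      ((hHp _).smul hdc))]
  have k := key hsmooth hhom hpos p v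
  have e : ∀ x : Sph n, ⟪v, gradient H (x : Eu n)⟫_ℝ = fderiv ℝ H x v := fun x => by
    rw [real_inner_comm, gradient, InnerProductSpace.toDual_symm_apply]
  simp only [inner_smul_right, e]
  simp only [real_inner_comm] at k ⊢
  field_simp
  linarith
end
end

section
/- Let n ≥ 1 and let K be a smooth, strictly convex body in ℝ^{n+1} with positive support function h. Then for all w₁, w₂ ∈ ℝ^{n+1}: ∫_{S^n} ⟨x, w₁⟩·⟨∇h_K(x), w₂⟩·det(A(x)+x⊗x) dθ(x) = ((1/(n+1))·∫_{S^n} h(x)·det(A(x)+x⊗x) dθ)·⟨w₁, w₂⟩; that is, ∫ X ⊗ (x/h) dV = ((∫ dV)/(n+1))·Id. -/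
open MeasureTheory Metric Real
open scoped InnerProductSpace ENNReal Topology

noncomputable section

namespace DivId

variable {n : ℕ} {K : Set (Eu n)}

lemma le_sfn (hK : IsSmoothConvexBody K) (z p : Eu n) (hp : p ∈ K) : ⟪z, p⟫_ℝ ≤ sfn K z := by
  apply le_csSup
  · exact (hK.compact.image (by fun_prop)).bddAbove
  · exact ⟨p, hp, rfl⟩

lemma exists_max (hK : IsSmoothConvexBody K) (z : Eu n) : ∃ p ∈ K, sfn K z = ⟪z, p⟫_ℝ := by
  have hne : K.Nonempty := hK.interior_nonempty.mono interior_subset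
  have := (hK.compact.image (f := fun y => ⟪z, y⟫_ℝ) (by fun_prop)).sSup_mem (hne.image _)
  obtain ⟨p, hp, h⟩ := this
  exact ⟨p, hp, h.symm⟩

lemma contDiffAt_sfn (hK : IsSmoothConvexBody K) {x : Eu n} (hx : x ≠ 0) :
    ContDiffAt ℝ (⊤ : ℕ∞) (sfn K) x :=
  (hK.smooth x hx).contDiffAt (isOpen_compl_singleton.mem_nhds hx)

lemma hasGradientAt_sfn (hK : IsSmoothConvexBody K) {x : Eu n} (hx : x ≠ 0) :
    HasGradientAt (sfn K) (gradient (sfn K) x) x :=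
  ((contDiffAt_sfn hK hx).differentiableAt (by simp)).hasGradientAt

lemma hasFDerivAt_sfn (hK : IsSmoothConvexBody K) {x : Eu n} (hx : x ≠ 0) :
    HasFDerivAt (sfn K) (innerSL ℝ (gradient (sfn K) x)) x :=
  (hasGradientAt_sfn hK hx).hasFDerivAt

/-- Touching from below by a linear functional determines the gradient. -/
lemma smul_grad_eq (hK : IsSmoothConvexBody K) {x : Eu n} (hx : x ≠ 0) (y : Eu n) (c : ℝ)
    (h : ∀ᶠ z in 𝓝 x, ⟪z, y⟫_ℝ ≤ c * sfn K z) (he : ⟪x, y⟫_ℝ = c * sfn K x) :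
    c • gradient (sfn K) x = y := by
  have hm : IsLocalMin (fun z => c * sfn K z - ⟪y, z⟫_ℝ) x := by
    filter_upwards [h] with z hz
    rw [real_inner_comm] at hz he
    rw [he]; linarith
  have hd : HasFDerivAt (fun z => c * sfn K z - ⟪y, z⟫_ℝ)
      (c • innerSL ℝ (gradient (sfn K) x) - innerSL ℝ y) x :=
    ((hasFDerivAt_sfn hK hx).const_mul c).sub (innerSL ℝ y).hasFDerivAt
  have h0 := hm.hasFDerivAt_eq_zero hd
  apply ext_inner_right ℝ
  intro v
  have := congrArg (fun L : Eu n →L[ℝ] ℝ => L v) h0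
  simp [inner_smul_left] at this ⊢
  linarith

lemma grad_eq_of_max (hK : IsSmoothConvexBody K) {x : Eu n} (hx : x ≠ 0) {p : Eu n} (hp : p ∈ K)
    (h : sfn K x = ⟪x, p⟫_ℝ) : gradient (sfn K) x = p := by
  have := smul_grad_eq hK hx p 1 (.of_forall fun z => by simpa using le_sfn hK z p hp)
    (by simp [h])
  simpa using this

lemma grad_mem (hK : IsSmoothConvexBody K) {x : Eu n} (hx : x ≠ 0) : gradient (sfn K) x ∈ K := by
  obtain ⟨p, hp, h⟩ := exists_max hK x
  rwa [grad_eq_of_max hK hx hp h]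

lemma sfn_eq (hK : IsSmoothConvexBody K) {x : Eu n} (hx : x ≠ 0) :
    sfn K x = ⟪x, gradient (sfn K) x⟫_ℝ := by
  obtain ⟨p, hp, h⟩ := exists_max hK x
  rwa [grad_eq_of_max hK hx hp h]

lemma sfn_smul (hK : IsSmoothConvexBody K) {c : ℝ} (hc : 0 < c) (x : Eu n) :
    sfn K (c • x) = c * sfn K x := by
  apply le_antisymm
  · obtain ⟨p, hp, h⟩ := exists_max hK (c • x)
    rw [h, inner_smul_left]
    simpa using mul_le_mul_of_nonneg_left (le_sfn hK x p hp) hc.le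
  · obtain ⟨p, hp, h⟩ := exists_max hK x
    have := le_sfn hK (c • x) p hp
    rw [h]
    simpa [inner_smul_left] using this

lemma grad_smul (hK : IsSmoothConvexBody K) {c : ℝ} (hc : 0 < c) {x : Eu n} (hx : x ≠ 0) :
    gradient (sfn K) (c • x) = gradient (sfn K) x := by
  apply grad_eq_of_max hK (smul_ne_zero hc.ne' hx) (grad_mem hK hx)
  rw [sfn_smul hK hc, sfn_eq hK hx, inner_smul_left]; simp

lemma sfn_pos (hK : IsSmoothConvexBody K) {x : Eu n} (hx : x ≠ 0) : 0 < sfn K x := by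
  have h1 : 0 < ‖x‖ := norm_pos_iff.2 hx
  have := hK.pos ⟨‖x‖⁻¹ • x, by simp [norm_smul, h1.ne']⟩
  rw [sfn_smul hK (by positivity)] at this
  exact (pos_iff_pos_of_mul_pos this).1 (by positivity)

lemma contDiffAt_grad (hK : IsSmoothConvexBody K) {x : Eu n} (hx : x ≠ 0) :
    ContDiffAt ℝ (⊤ : ℕ∞) (gradient (sfn K)) x := by
  have h1 : ContDiffAt ℝ (⊤ : ℕ∞) (fderiv ℝ (sfn K)) x :=
    (contDiffAt_sfn hK hx).fderiv_right (by simp)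
  exact (InnerProductSpace.toDual ℝ (Eu n)).symm.contDiff.contDiffAt.comp x h1

lemma hasFDerivAt_grad (hK : IsSmoothConvexBody K) {x : Eu n} (hx : x ≠ 0) :
    HasFDerivAt (gradient (sfn K)) (hessA K x) x :=
  ((contDiffAt_grad hK hx).differentiableAt (by simp)).hasFDerivAt

lemma inner_hessA (hK : IsSmoothConvexBody K) {x : Eu n} (hx : x ≠ 0) (v : Eu n) :
    ⟪x, hessA K x v⟫_ℝ = 0 := by
  have h1 := (hasFDerivAt_id (𝕜 := ℝ) x).inner ℝ (hasFDerivAt_grad hK hx)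
  have h2 : (fun z => ⟪id z, gradient (sfn K) z⟫_ℝ) =ᶠ[𝓝 x] sfn K := by
    filter_upwards [isOpen_compl_singleton.mem_nhds hx] with z hz
    exact (sfn_eq hK hz).symm
  have h3 := (h1.congr_of_eventuallyEq h2.symm).unique (hasFDerivAt_sfn hK hx)
  have := congrArg (fun L : Eu n →L[ℝ] ℝ => L v) h3
  simpa [real_inner_comm] using this

lemma hessA_self (hK : IsSmoothConvexBody K) {x : Eu n} (hx : x ≠ 0) : hessA K x x = 0 := by
  have h1 : HasDerivAt (fun t : ℝ => t • x) x 1 := by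
    simpa using (hasDerivAt_id (1 : ℝ)).smul_const x
  have h2 : HasFDerivAt (gradient (sfn K)) (hessA K x) ((1 : ℝ) • x) := by
    simpa using hasFDerivAt_grad hK hx
  have h3 := h2.comp_hasDerivAt (1 : ℝ) h1
  have h4 : (gradient (sfn K) ∘ fun t : ℝ => t • x) =ᶠ[𝓝 1] fun _ => gradient (sfn K) x := by
    filter_upwards [lt_mem_nhds (zero_lt_one (α := ℝ))] with t ht
    exact grad_smul hK ht hx
  exact (h3.congr_of_eventuallyEq h4.symm).unique (hasDerivAt_const _ _)

/-- Positivity of the curvature determinant. -/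
lemma rK_pos (hK : IsSmoothConvexBody K) (x : Sph n) : 0 < rK K (x : Eu n) := by
  set B : Eu n →L[ℝ] Eu n := hessA K (x : Eu n) + tens (x : Eu n) with hB
  let C : ℝ → (Eu n →L[ℝ] Eu n) := fun t => (1 - t) • ContinuousLinearMap.id ℝ (Eu n) + t • B
  have hcont : Continuous fun t => (C t).det :=
    ContinuousLinearMap.continuous_det.comp (by fun_prop)
  have hne : ∀ t ∈ Set.Icc (0 : ℝ) 1, (C t).det ≠ 0 := by
    intro t ht h0
    have h0' : LinearMap.det ((C t : Eu n →L[ℝ] Eu n) : Eu n →ₗ[ℝ] Eu n) = 0 := h0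
    obtain ⟨v, hv, hv0⟩ := (Submodule.ne_bot_iff _).1 (LinearMap.bot_lt_ker_of_det_eq_zero h0').ne'
    have h1 : C t v = 0 := hv
    have h2 : ⟪C t v, v⟫_ℝ = (1 - t) * ‖v‖ ^ 2 + t * ⟪B v, v⟫_ℝ := by
      simp [C, inner_add_left, inner_smul_left]
    have h3 := hK.posdef x v hv0
    rw [← hB] at h3
    rw [h1, inner_zero_left] at h2
    have h4 : 0 < ‖v‖ ^ 2 := by positivity
    rcases ht.2.lt_or_eq with h | h
    · have := mul_pos (sub_pos.2 h) h4
      have := mul_nonneg ht.1 h3.le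
      linarith
    · subst h; linarith
  have h0 : (C 0).det = 1 := by simp [C, ContinuousLinearMap.det]
  have h1 : (C 1).det = rK K (x : Eu n) := by simp [C, ContinuousLinearMap.det, rK, hB]
  by_contra hneg
  rw [← h1] at hneg
  have := intermediate_value_Icc' (zero_le_one (α := ℝ)) hcont.continuousOn
  obtain ⟨t, ht, h⟩ := this (show (0 : ℝ) ∈ _ from ⟨not_lt.1 hneg, by rw [h0]; simp⟩)
  exact hne t ht h

lemma grad_inj (hK : IsSmoothConvexBody K) {x y : Eu n} (hx : ‖x‖ = 1) (hy : ‖y‖ = 1)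
    (h : gradient (sfn K) x = gradient (sfn K) y) : x = y := by
  have hx0 : x ≠ 0 := by rintro rfl; simp at hx
  have hy0 : y ≠ 0 := by rintro rfl; simp at hy
  set p := gradient (sfn K) x with hp
  have hpK : p ∈ K := grad_mem hK hx0
  have h1 : sfn K x = ⟪x, p⟫_ℝ := sfn_eq hK hx0
  have h2 : sfn K y = ⟪y, p⟫_ℝ := by rw [h]; exact sfn_eq hK hy0
  have key : ∀ t ∈ Set.Icc (0 : ℝ) 1, gradient (sfn K) (x + t • (y - x)) = p := by
    intro t ht
    set z := x + t • (y - x) with hz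
    have hz1 : ∀ q, ⟪z, q⟫_ℝ = (1 - t) * ⟪x, q⟫_ℝ + t * ⟪y, q⟫_ℝ := by
      intro q
      simp [hz, inner_add_left, inner_smul_left, inner_sub_left]; ring
    have hle : sfn K z ≤ ⟪z, p⟫_ℝ := by
      obtain ⟨q, hq, hq'⟩ := exists_max hK z
      rw [hq', hz1, hz1, ← h1, ← h2]
      have a := mul_le_mul_of_nonneg_left (le_sfn hK x q hq) (sub_nonneg.2 ht.2)
      have b := mul_le_mul_of_nonneg_left (le_sfn hK y q hq) ht.1
      linarith
    have hz0 : z ≠ 0 := by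
      intro h0
      have := hz1 p
      rw [h0, inner_zero_left, ← h1, ← h2] at this
      have a := sfn_pos hK hx0
      have b := sfn_pos hK hy0
      rcases ht.2.lt_or_eq with h | h
      · have := mul_pos (sub_pos.2 h) a
        have := mul_nonneg ht.1 b.le
        linarith
      · subst h; linarith
    exact grad_eq_of_max hK hz0 hpK (le_antisymm hle (le_sfn hK z p hpK))
  have hA : hessA K x (y - x) = 0 := by
    have d1 : HasDerivAt (fun t : ℝ => x + t • (y - x)) (y - x) 0 := by
      simpa using ((hasDerivAt_id (0 : ℝ)).smul_const (y - x)).const_add x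
    have d2 : HasFDerivAt (gradient (sfn K)) (hessA K x) (x + (0 : ℝ) • (y - x)) := by
      simpa using hasFDerivAt_grad hK hx0
    have d3 := (d2.comp_hasDerivAt (0 : ℝ) d1).hasDerivWithinAt (s := Set.Icc 0 1)
    have d4 : HasDerivWithinAt (fun _ : ℝ => p) (hessA K x (y - x)) (Set.Icc 0 1) 0 :=
      d3.congr (fun t ht => (key t ht).symm) (key 0 (by simp)).symm
    exact ((uniqueDiffOn_Icc zero_lt_one) 0 (by simp)).eq_deriv _ d4 (hasDerivWithinAt_const _ _ _)
  set v := y - x with hv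
  set w := v - ⟪x, v⟫_ℝ • x with hw
  have hxx : ⟪x, x⟫_ℝ = 1 := by rw [real_inner_self_eq_norm_sq, hx]; norm_num
  have hw0 : w = 0 := by
    by_contra hne
    have := hK.posdef ⟨x, by simp [hx]⟩ w hne
    have e1 : hessA K x w = 0 := by simp [hw, hA, hessA_self hK hx0]
    have e2 : tens x w = 0 := by
      have : ⟪x, w⟫_ℝ = 0 := by rw [hw, inner_sub_right, inner_smul_right, hxx]; ring
      simp [tens, this]
    simp [e1, e2] at this
  have hyx : y = (1 + ⟪x, v⟫_ℝ) • x := by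
    have : y = x + v := by simp [hv]
    rw [add_smul, one_smul]
    rw [hw, sub_eq_zero] at hw0
    rw [← hw0]; exact this
  set l := 1 + ⟪x, v⟫_ℝ
  have hl : 0 < l := by
    have a := sfn_pos hK hx0
    have b := sfn_pos hK hy0
    rw [h2, hyx, inner_smul_left, ← h1] at b
    simp at b
    exact (pos_iff_pos_of_mul_pos b).2 a
  have : l = 1 := by
    rw [hyx, norm_smul, hx, Real.norm_of_nonneg hl.le] at hy
    simpa using hy
  rw [hyx, this, one_smul]

lemma hasFDerivAt_nrm {x : Eu n} (hx : x ≠ 0) :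
    HasFDerivAt (fun z : Eu n => ‖z‖) (‖x‖⁻¹ • innerSL ℝ x) x := by
  have h1 : 0 < ‖x‖ := norm_pos_iff.2 hx
  have h := (hasStrictFDerivAt_norm_sq x).hasFDerivAt.sqrt (by positivity)
  have e : (fun z : Eu n => √(‖z‖ ^ 2)) = fun z => ‖z‖ := by
    funext z; exact Real.sqrt_sq (norm_nonneg z)
  rw [e] at h
  refine h.congr_fderiv ?_
  rw [Real.sqrt_sq h1.le]
  ext v
  simp
  field_simp

/-- The radial map `x ↦ |x| ∇h(x)`. -/
def rad (K : Set (Eu n)) (x : Eu n) : Eu n := ‖x‖ • gradient (sfn K) x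

/-- The derivative of the radial map. -/
def dRad (K : Set (Eu n)) (x : Eu n) : Eu n →L[ℝ] Eu n :=
  ‖x‖ • hessA K x + (‖x‖⁻¹ • innerSL ℝ x).smulRight (gradient (sfn K) x)

lemma hasFDerivAt_rad (hK : IsSmoothConvexBody K) {x : Eu n} (hx : x ≠ 0) :
    HasFDerivAt (rad K) (dRad K x) x :=
  (hasFDerivAt_nrm hx).smul (hasFDerivAt_grad hK hx)

lemma contDiffAt_rad (hK : IsSmoothConvexBody K) {x : Eu n} (hx : x ≠ 0) :
    ContDiffAt ℝ (⊤ : ℕ∞) (rad K) x :=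
  (contDiffAt_norm ℝ hx).smul (contDiffAt_grad hK hx)

lemma hasStrictFDerivAt_rad (hK : IsSmoothConvexBody K) {x : Eu n} (hx : x ≠ 0) :
    HasStrictFDerivAt (rad K) (dRad K x) x :=
  (contDiffAt_rad hK hx).hasStrictFDerivAt' (hasFDerivAt_rad hK hx) (by simp)

lemma continuousOn_dRad (hK : IsSmoothConvexBody K) : ContinuousOn (dRad K) {(0 : Eu n)}ᶜ := by
  have h : ContinuousOn (fderiv ℝ (rad K)) {(0 : Eu n)}ᶜ := by
    apply ContDiffOn.continuousOn_fderiv_of_isOpen (n := (⊤ : ℕ∞)) _ isOpen_compl_singleton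
      (by simp)
    intro x hx
    exact (contDiffAt_rad hK hx).contDiffWithinAt
  exact h.congr fun x hx => ((hasFDerivAt_rad hK hx).fderiv).symm

lemma rad_smul (hK : IsSmoothConvexBody K) {c : ℝ} (hc : 0 < c) {x : Eu n} (hx : x ≠ 0) :
    rad K (c • x) = c • rad K x := by
  rw [rad, rad, grad_smul hK hc hx, norm_smul, Real.norm_of_nonneg hc.le, mul_smul]

lemma dRad_smul (hK : IsSmoothConvexBody K) {c : ℝ} (hc : 0 < c) {x : Eu n} (hx : x ≠ 0) :
    dRad K (c • x) = dRad K x := by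
  have h1 : HasFDerivAt (fun z : Eu n => c • z) (c • ContinuousLinearMap.id ℝ (Eu n)) x :=
    (hasFDerivAt_id x).const_smul c
  have h2 := (hasFDerivAt_rad hK (smul_ne_zero hc.ne' hx)).comp x h1
  have h3 : (rad K ∘ fun z : Eu n => c • z) =ᶠ[𝓝 x] fun z => c • rad K z := by
    filter_upwards [isOpen_compl_singleton.mem_nhds hx] with z hz
    exact rad_smul hK hc hz
  have h4 := (h2.congr_of_eventuallyEq h3.symm).unique ((hasFDerivAt_rad hK hx).const_smul c)
  ext1 v
  have := congrArg (fun L : Eu n →L[ℝ] Eu n => L v) h4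
  simp at this
  exact smul_right_injective _ hc.ne' this

lemma det_dRad_unit (hK : IsSmoothConvexBody K) {x : Eu n} (hx : ‖x‖ = 1) :
    (dRad K x).det = sfn K x * rK K x := by
  have hx0 : x ≠ 0 := by rintro rfl; simp at hx
  let T := LinearMap.transvection (R := ℝ) ((innerSL ℝ x : Eu n →L[ℝ] ℝ) : Eu n →ₗ[ℝ] ℝ)
    (gradient (sfn K) x - x)
  have hT : LinearMap.det T = sfn K x := by
    rw [LinearMap.transvection.det, sfn_eq hK hx0]
    simp [inner_sub_right, hx]
  have : ((dRad K x : Eu n →L[ℝ] Eu n) : Eu n →ₗ[ℝ] Eu n) =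
      T ∘ₗ ((hessA K x + tens x : Eu n →L[ℝ] Eu n) : Eu n →ₗ[ℝ] Eu n) := by
    ext1 v
    have hA := inner_hessA hK hx0 v
    simp only [T, LinearMap.comp_apply, LinearMap.transvection.apply, ContinuousLinearMap.coe_coe]
    simp [dRad, tens, hx, hA, inner_add_right, inner_smul_right, smul_sub]
  rw [ContinuousLinearMap.det, this, LinearMap.det_comp, hT, rK]

lemma nrm_pos {x : Eu n} (hx : x ≠ 0) : 0 < ‖x‖ := norm_pos_iff.2 hx

lemma nrm_hat {x : Eu n} (hx : x ≠ 0) : ‖‖x‖⁻¹ • x‖ = 1 := by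
  simp [norm_smul, (nrm_pos hx).ne']

lemma det_dRad (hK : IsSmoothConvexBody K) {x : Eu n} (hx : x ≠ 0) :
    (dRad K x).det = sfn K (‖x‖⁻¹ • x) * rK K (‖x‖⁻¹ • x) := by
  rw [← det_dRad_unit hK (nrm_hat hx), dRad_smul hK (inv_pos.2 (nrm_pos hx)) hx]

lemma det_dRad_pos (hK : IsSmoothConvexBody K) {x : Eu n} (hx : x ≠ 0) :
    0 < (dRad K x).det := by
  rw [det_dRad hK hx]
  have := rK_pos hK ⟨‖x‖⁻¹ • x, by simpa using nrm_hat hx⟩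
  exact mul_pos (hK.pos ⟨‖x‖⁻¹ • x, by simpa using nrm_hat hx⟩) this

lemma rad_injOn (hK : IsSmoothConvexBody K) : Set.InjOn (rad K) {(0 : Eu n)}ᶜ := by
  have aux : ∀ x y : Eu n, x ≠ 0 → y ≠ 0 → rad K x = rad K y → ‖y‖ ≤ ‖x‖ := by
    intro x y hx hy h
    have h1 : ‖x‖ * sfn K x = ‖y‖ * ⟪x, gradient (sfn K) y⟫_ℝ := by
      rw [sfn_eq hK hx, ← inner_smul_right, ← inner_smul_right]
      exact congrArg (fun z => ⟪x, z⟫_ℝ) h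
    have h2 := le_sfn hK x _ (grad_mem hK hy)
    have h3 := sfn_pos hK hx
    have h4 := nrm_pos hx
    have h5 := nrm_pos hy
    -- apply with the roles of the two points exchanged
    by_contra hlt
    push Not at hlt
    have h6 : ‖y‖ * sfn K y = ‖x‖ * ⟪y, gradient (sfn K) x⟫_ℝ := by
      rw [sfn_eq hK hy, ← inner_smul_right, ← inner_smul_right]
      exact congrArg (fun z => ⟪y, z⟫_ℝ) h.symm
    have h7 := le_sfn hK y _ (grad_mem hK hx)
    have h8 := sfn_pos hK hy
    nlinarith [mul_le_mul_of_nonneg_left h7 h4.le, mul_pos (sub_pos.2 hlt) h8]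
  intro x hx y hy h
  have hn : ‖x‖ = ‖y‖ := le_antisymm (aux y x hy hx h.symm) (aux x y hx hy h)
  have hg : gradient (sfn K) x = gradient (sfn K) y := by
    rw [rad, rad, ← hn] at h
    exact smul_right_injective _ (nrm_pos hx).ne' h
  have := grad_inj hK (nrm_hat hx) (nrm_hat hy)
    (by rw [grad_smul hK (inv_pos.2 (nrm_pos hx)) hx, grad_smul hK (inv_pos.2 (nrm_pos hy)) hy, hg])
  rw [← hn] at this
  exact smul_right_injective _ (inv_pos.2 (nrm_pos hx)).ne' this

lemma continuousOn_sfn (hK : IsSmoothConvexBody K) : ContinuousOn (sfn K) {(0 : Eu n)}ᶜ :=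
  hK.smooth.continuousOn

lemma sphere_sub : sphere (0 : Eu n) 1 ⊆ {(0 : Eu n)}ᶜ := by
  intro x hx h
  simp at h
  subst h
  simp at hx

lemma rad_ne (hK : IsSmoothConvexBody K) {x : Eu n} (hx : x ≠ 0) : rad K x ≠ 0 := by
  intro h
  have h1 : ⟪x, rad K x⟫_ℝ = ‖x‖ * sfn K x := by
    rw [rad, inner_smul_right, sfn_eq hK hx]
  rw [h, inner_zero_right] at h1
  have := mul_pos (nrm_pos hx) (sfn_pos hK hx)
  linarith

lemma rad_surj (hK : IsSmoothConvexBody K) {y : Eu n} (hy : y ≠ 0) :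
    ∃ x, x ≠ 0 ∧ rad K x = y := by
  have hy' : ‖y‖⁻¹ • y ∈ sphere (0 : Eu n) 1 := by simpa using nrm_hat hy
  obtain ⟨x, hx, hmax⟩ := (isCompact_sphere (0 : Eu n) 1).exists_isMaxOn ⟨_, hy'⟩
    (f := fun z => ⟪z, y⟫_ℝ / sfn K z)
    (ContinuousOn.div (by fun_prop) ((continuousOn_sfn hK).mono sphere_sub)
      fun z hz => (sfn_pos hK (sphere_sub hz)).ne')
  have hx0 : x ≠ 0 := sphere_sub hx
  have hx1 : ‖x‖ = 1 := by simpa using hx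
  set μ := ⟪x, y⟫_ℝ / sfn K x with hμ
  have hle : ∀ z : Eu n, z ≠ 0 → ⟪z, y⟫_ℝ ≤ μ * sfn K z := by
    intro z hz
    have h1 := hmax (show ‖z‖⁻¹ • z ∈ sphere (0 : Eu n) 1 by simpa using nrm_hat hz)
    have hz1 := nrm_pos hz
    have h2 : ⟪‖z‖⁻¹ • z, y⟫_ℝ / sfn K (‖z‖⁻¹ • z) ≤ μ := h1
    rw [sfn_smul hK (inv_pos.2 hz1), inner_smul_left] at h2
    simp only [conj_trivial] at h2
    rw [mul_div_mul_left _ _ (inv_pos.2 hz1).ne', div_le_iff₀ (sfn_pos hK hz)] at h2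
    exact h2
  have hμ0 : 0 < μ := by
    have h1 := hle y hy
    rw [real_inner_self_eq_norm_sq] at h1
    have h2 : 0 < ‖y‖ ^ 2 := by have := nrm_pos hy; positivity
    exact (pos_iff_pos_of_mul_pos (h2.trans_le h1)).2 (sfn_pos hK hy)
  have hg : μ • gradient (sfn K) x = y := by
    apply smul_grad_eq hK hx0
    · filter_upwards [isOpen_compl_singleton.mem_nhds hx0] with z hz using hle z hz
    · rw [hμ, div_mul_cancel₀ _ (sfn_pos hK hx0).ne']
  refine ⟨μ • x, smul_ne_zero hμ0.ne' hx0, ?_⟩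
  rw [rad_smul hK hμ0 hx0, rad, hx1, one_smul, hg]

lemma rad_image (hK : IsSmoothConvexBody K) : rad K '' {(0 : Eu n)}ᶜ = {(0 : Eu n)}ᶜ := by
  ext y
  constructor
  · rintro ⟨x, hx, rfl⟩
    exact rad_ne hK hx
  · intro hy
    obtain ⟨x, hx, h⟩ := rad_surj hK hy
    exact ⟨x, hx, h⟩

lemma rad_lower (hK : IsSmoothConvexBody K) : ∃ c > 0, ∀ x : Eu n, x ≠ 0 → c * ‖x‖ ≤ ‖rad K x‖ := by
  have hne : (sphere (0 : Eu n) 1).Nonempty := NormedSpace.sphere_nonempty.2 zero_le_one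
  obtain ⟨x₀, hx₀, hmin⟩ := (isCompact_sphere (0 : Eu n) 1).exists_isMinOn hne
    ((continuousOn_sfn hK).mono sphere_sub)
  refine ⟨sfn K x₀, sfn_pos hK (sphere_sub hx₀), fun x hx => ?_⟩
  have h1 : sfn K x₀ ≤ sfn K (‖x‖⁻¹ • x) :=
    hmin (show ‖x‖⁻¹ • x ∈ sphere (0 : Eu n) 1 by simpa using nrm_hat hx)
  have hx1 := nrm_pos hx
  rw [sfn_eq hK (smul_ne_zero (inv_pos.2 hx1).ne' hx), grad_smul hK (inv_pos.2 hx1) hx] at h1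
  have h2 := real_inner_le_norm (‖x‖⁻¹ • x) (gradient (sfn K) x)
  rw [nrm_hat hx, one_mul] at h2
  rw [rad, norm_smul, norm_norm, mul_comm]
  exact mul_le_mul_of_nonneg_left (h1.trans h2) hx1.le

/-- The inverse of the radial map. -/
def radInv (K : Set (Eu n)) : Eu n → Eu n := Function.invFunOn (rad K) {(0 : Eu n)}ᶜ

lemma radInv_rad (hK : IsSmoothConvexBody K) {x : Eu n} (hx : x ≠ 0) : radInv K (rad K x) = x :=
  (rad_injOn hK).leftInvOn_invFunOn hx

lemma hasFDerivAt_nrm_radInv (hK : IsSmoothConvexBody K) {x : Eu n} (hx : x ≠ 0) :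
    HasFDerivAt (fun y => ‖radInv K y‖) ((sfn K x)⁻¹ • innerSL ℝ x) (rad K x) := by
  have hdet := (det_dRad_pos hK hx).ne'
  let e := (dRad K x).toContinuousLinearEquivOfDetNeZero hdet
  have he : (e : Eu n →L[ℝ] Eu n) = dRad K x :=
    ContinuousLinearMap.coe_toContinuousLinearEquivOfDetNeZero _ hdet
  have h1 : HasStrictFDerivAt (rad K) (e : Eu n →L[ℝ] Eu n) x := by
    rw [he]; exact hasStrictFDerivAt_rad hK hx
  have h2 := (h1.to_local_left_inverse (g := radInv K) (by
    filter_upwards [isOpen_compl_singleton.mem_nhds hx] with z hz using radInv_rad hK hz)).hasFDerivAt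
  have h3 : HasFDerivAt (fun z : Eu n => ‖z‖) (‖x‖⁻¹ • innerSL ℝ x) (radInv K (rad K x)) := by
    rw [radInv_rad hK hx]; exact hasFDerivAt_nrm hx
  have h4 := h3.comp _ h2
  refine h4.congr_fderiv ?_
  ext1 w
  obtain ⟨v, rfl⟩ := e.surjective w
  have h5 : e v = dRad K x v := by rw [← he]; rfl
  have h6 : ⟪x, dRad K x v⟫_ℝ = ‖x‖⁻¹ * ⟪x, v⟫_ℝ * sfn K x := by
    simp [dRad, inner_add_right, inner_smul_right, inner_hessA hK hx, sfn_eq hK hx]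
  have h7 := (sfn_pos hK hx).ne'
  simp [h5, h6]
  rw [← h5]
  simp
  field_simp

lemma cov_integral (hK : IsSmoothConvexBody K) (k : Eu n → ℝ) :
    ∫ y, k y = ∫ x in {(0 : Eu n)}ᶜ, (dRad K x).det * k (rad K x) := by
  have h := integral_image_eq_integral_abs_det_fderiv_smul (volume : Measure (Eu n))
    (measurableSet_singleton (0 : Eu n)).compl
    (fun x hx => (hasFDerivAt_rad hK hx).hasFDerivWithinAt) (rad_injOn hK) k
  rw [rad_image hK] at h
  conv_lhs => rw [← restrict_compl_singleton (μ := (volume : Measure (Eu n))) 0]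
  rw [h]
  refine setIntegral_congr_fun (measurableSet_singleton (0 : Eu n)).compl fun x hx => ?_
  simp only [smul_eq_mul]
  rw [abs_of_pos (det_dRad_pos hK hx)]

lemma cov_integrable (hK : IsSmoothConvexBody K) (k : Eu n → ℝ) :
    Integrable k ↔ IntegrableOn (fun x => (dRad K x).det * k (rad K x)) {(0 : Eu n)}ᶜ := by
  have h := integrableOn_image_iff_integrableOn_abs_det_fderiv_smul (volume : Measure (Eu n))
    (measurableSet_singleton (0 : Eu n)).compl
    (fun x hx => (hasFDerivAt_rad hK hx).hasFDerivWithinAt) (rad_injOn hK) k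
  rw [rad_image hK] at h
  have h' : Integrable k ↔ IntegrableOn k {(0 : Eu n)}ᶜ := by
    rw [IntegrableOn, restrict_compl_singleton]
  rw [h', h]
  refine integrableOn_congr_fun (fun x hx => ?_) (measurableSet_singleton (0 : Eu n)).compl
  simp only [smul_eq_mul]
  rw [abs_of_pos (det_dRad_pos hK hx)]

lemma integrableOn_of_annulus (k : Eu n → ℝ) (hk : ContinuousOn k {(0 : Eu n)}ᶜ)
    (h0 : ∀ x, ‖x‖ ∉ Set.Icc (1 : ℝ) 2 → k x = 0) : IntegrableOn k {(0 : Eu n)}ᶜ := by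
  set A : Set (Eu n) := closedBall 0 2 ∩ {x | 1 ≤ ‖x‖} with hA
  have hAc : IsCompact A := (isCompact_closedBall _ _).inter_right
    (isClosed_le continuous_const continuous_norm)
  have hAs : A ⊆ {(0 : Eu n)}ᶜ := by
    rintro x ⟨-, hx⟩ h
    simp at h
    subst h
    norm_num at hx
  have h1 : IntegrableOn k A := (hk.mono hAs).integrableOn_compact hAc
  have h2 : Integrable k := by
    rwa [integrableOn_iff_integrable_of_support_subset] at h1
    intro x hx
    by_contra hxA
    apply hx
    apply h0
    intro hh
    exact hxA ⟨by simpa using hh.2, hh.1⟩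
  exact h2.integrableOn

lemma polar (a : ℝ → ℝ) (q : Eu n → ℝ) :
    ∫ x in {(0 : Eu n)}ᶜ, a ‖x‖ * q (‖x‖⁻¹ • x) =
      (∫ t in Set.Ioi (0 : ℝ), t ^ n * a t) * ∫ θ : Sph n, q θ ∂sphMeas n := by
  have h1 := (volume : Measure (Eu n)).measurePreserving_homeomorphUnitSphereProd.integral_comp
    (Homeomorph.measurableEmbedding _) (fun p : Sph n × Set.Ioi (0 : ℝ) => q p.1 * a p.2)
  rw [integral_prod_mul (fun θ : Sph n => q θ) (fun t : Set.Ioi (0 : ℝ) => a t)] at h1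
  simp only [homeomorphUnitSphereProd_apply_snd_coe, homeomorphUnitSphereProd_apply_fst_coe] at h1
  rw [integral_subtype_comap (measurableSet_singleton _).compl
    (fun x : Eu n => q (‖x‖⁻¹ • x) * a ‖x‖)] at h1
  have h2 : ∫ t : Set.Ioi (0 : ℝ), a t ∂(Measure.volumeIoiPow n) =
      ∫ t in Set.Ioi (0 : ℝ), t ^ n * a t := by
    simp only [Measure.volumeIoiPow, ENNReal.ofReal]
    rw [integral_withDensity_eq_integral_smul,
      integral_subtype_comap measurableSet_Ioi fun s ↦ Real.toNNReal (s ^ n) • a s,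
      setIntegral_congr_fun measurableSet_Ioi fun x hx ↦ ?_]
    · rw [NNReal.smul_def, Real.coe_toNNReal _ (pow_nonneg hx.out.le _), smul_eq_mul]
    · exact (measurable_subtype_coe.pow_const _).real_toNNReal
  have h3 : Module.finrank ℝ (Eu n) - 1 = n := by simp
  rw [h3, h2] at h1
  rw [mul_comm, sphMeas, ← h1]
  simp only [mul_comm]

/-- A fixed bump function supported in `[1, 2]`. -/
def bmp : ContDiffBump (3 / 2 : ℝ) := ⟨1 / 4, 1 / 2, by norm_num, by norm_num⟩

lemma bmp_zero {t : ℝ} (ht : t ∉ Set.Ioo (1 : ℝ) 2) : bmp t = 0 := by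
  apply bmp.zero_of_le_dist
  show (1 / 2 : ℝ) ≤ _
  rw [Real.dist_eq]
  by_contra h
  push Not at h
  rw [abs_lt] at h
  exact ht ⟨by linarith, by linarith⟩

lemma bmp_contDiff : ContDiff ℝ 1 bmp := bmp.contDiff

lemma bmp_deriv (t : ℝ) : HasDerivAt bmp (deriv bmp t) t :=
  (bmp_contDiff.differentiable (by simp) t).hasDerivAt

lemma bmp_deriv_cont : Continuous (deriv bmp) := bmp_contDiff.continuous_deriv (by simp)

lemma bmp_deriv_zero {t : ℝ} (ht : t ∉ Set.Icc (1 : ℝ) 2) : deriv bmp t = 0 := by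
  have : (bmp : ℝ → ℝ) =ᶠ[𝓝 t] fun _ => 0 := by
    filter_upwards [isClosed_Icc.isOpen_compl.mem_nhds ht] with s hs
    exact bmp_zero fun h => hs ⟨h.1.le, h.2.le⟩
  rw [this.deriv_eq]; simp

lemma bmp_int_pos : 0 < ∫ t in Set.Ioi (0 : ℝ), t ^ n * bmp t := by
  have hc : Continuous fun t : ℝ => t ^ n * bmp t := by
    have := bmp_contDiff.continuous
    fun_prop
  have e : ∫ t in Set.Ioi (0 : ℝ), t ^ n * bmp t = ∫ t in (1 : ℝ)..2, t ^ n * bmp t := by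
    rw [intervalIntegral.integral_of_le (by norm_num)]
    apply setIntegral_eq_of_subset_of_forall_sdiff_eq_zero measurableSet_Ioi
    · intro t ht; exact lt_trans zero_lt_one ht.1
    · intro t ht
      rw [bmp_zero, mul_zero]
      intro h
      exact ht.2 ⟨h.1, h.2.le⟩
  rw [e]
  apply intervalIntegral.integral_pos (by norm_num) hc.continuousOn
  · intro t ht
    have : 0 < t := lt_trans zero_lt_one ht.1
    exact mul_nonneg (by positivity) bmp.nonneg
  · refine ⟨3 / 2, ⟨by norm_num, by norm_num⟩, ?_⟩
    apply mul_pos (by positivity)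
    apply bmp.pos_of_mem_ball
    exact mem_ball_self bmp.rOut_pos

lemma bmp_ibp : ∫ t in Set.Ioi (0 : ℝ), t ^ n * (t * deriv bmp t) =
    -(((n : ℝ) + 1) * ∫ t in Set.Ioi (0 : ℝ), t ^ n * bmp t) := by
  have hb := bmp_contDiff.continuous
  have hb' := bmp_deriv_cont
  have e1 : ∫ t in Set.Ioi (0 : ℝ), t ^ n * bmp t = ∫ t in (1 : ℝ)..2, t ^ n * bmp t := by
    rw [intervalIntegral.integral_of_le (by norm_num)]
    apply setIntegral_eq_of_subset_of_forall_sdiff_eq_zero measurableSet_Ioi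
    · intro t ht; exact lt_trans zero_lt_one ht.1
    · intro t ht
      rw [bmp_zero, mul_zero]
      intro h
      exact ht.2 ⟨h.1, h.2.le⟩
  have e2 : ∫ t in Set.Ioi (0 : ℝ), t ^ n * (t * deriv bmp t) =
      ∫ t in (1 : ℝ)..2, t ^ n * (t * deriv bmp t) := by
    rw [intervalIntegral.integral_of_le (by norm_num), ← integral_Icc_eq_integral_Ioc]
    apply setIntegral_eq_of_subset_of_forall_sdiff_eq_zero measurableSet_Ioi
    · intro t ht; exact lt_of_lt_of_le zero_lt_one ht.1
    · intro t ht
      rw [bmp_deriv_zero ht.2]; simp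
  rw [e1, e2]
  have hd : ∀ t : ℝ, HasDerivAt (fun t => t ^ (n + 1) * bmp t)
      (((n : ℝ) + 1) * (t ^ n * bmp t) + t ^ n * (t * deriv bmp t)) t := by
    intro t
    refine ((hasDerivAt_pow (n + 1) t).mul (bmp_deriv t)).congr_deriv ?_
    simp; ring
  have h := intervalIntegral.integral_eq_sub_of_hasDerivAt (a := 1) (b := 2) (fun t _ => hd t)
    (Continuous.intervalIntegrable (by fun_prop) _ _)
  rw [intervalIntegral.integral_add (Continuous.intervalIntegrable (by fun_prop) _ _)
    (Continuous.intervalIntegrable (by fun_prop) _ _), intervalIntegral.integral_const_mul,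
    bmp_zero (t := 1) (by simp), bmp_zero (t := 2) (by simp)] at h
  linarith

/-- The test function on the target side. -/
def tst (K : Set (Eu n)) (y : Eu n) : ℝ := if y = 0 then 0 else bmp ‖radInv K y‖

/-- Its derivative. -/
def dTst (K : Set (Eu n)) (y : Eu n) : Eu n →L[ℝ] ℝ :=
  if y = 0 then 0 else
    (deriv bmp ‖radInv K y‖ * (sfn K (radInv K y))⁻¹) • innerSL ℝ (radInv K y)

lemma tst_rad (hK : IsSmoothConvexBody K) {x : Eu n} (hx : x ≠ 0) :
    tst K (rad K x) = bmp ‖x‖ := by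
  rw [tst, if_neg (rad_ne hK hx), radInv_rad hK hx]

lemma dTst_rad (hK : IsSmoothConvexBody K) {x : Eu n} (hx : x ≠ 0) :
    dTst K (rad K x) = (deriv bmp ‖x‖ * (sfn K x)⁻¹) • innerSL ℝ x := by
  rw [dTst, if_neg (rad_ne hK hx), radInv_rad hK hx]

lemma hasFDerivAt_tst (hK : IsSmoothConvexBody K) (y : Eu n) :
    HasFDerivAt (tst K) (dTst K y) y := by
  by_cases hy : y = 0
  · subst hy
    obtain ⟨c, hc, hlow⟩ := rad_lower hK
    have : tst K =ᶠ[𝓝 0] fun _ => 0 := by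
      filter_upwards [ball_mem_nhds (0 : Eu n) hc] with z hz
      by_cases hz0 : z = 0
      · simp [tst, hz0]
      obtain ⟨x, hx, rfl⟩ := rad_surj hK hz0
      rw [tst_rad hK hx]
      apply bmp_zero
      intro h
      have h1 := hlow x hx
      simp at hz
      nlinarith [h.1]
    rw [dTst, if_pos rfl]
    exact (hasFDerivAt_const (0 : ℝ) (0 : Eu n)).congr_of_eventuallyEq this
  · obtain ⟨x, hx, rfl⟩ := rad_surj hK hy
    rw [dTst_rad hK hx]
    have h1 : HasDerivAt bmp (deriv bmp ‖x‖) ‖radInv K (rad K x)‖ := by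
      rw [radInv_rad hK hx]; exact bmp_deriv _
    have h2 := h1.comp_hasFDerivAt (rad K x) (hasFDerivAt_nrm_radInv hK hx)
    rw [smul_smul] at h2
    refine h2.congr_of_eventuallyEq ?_
    filter_upwards [isOpen_compl_singleton.mem_nhds hy] with z hz
    have hz' : z ≠ 0 := hz
    simp [tst, hz']

lemma continuousOn_det (hK : IsSmoothConvexBody K) :
    ContinuousOn (fun x => (dRad K x).det) {(0 : Eu n)}ᶜ :=
  ContinuousLinearMap.continuous_det.comp_continuousOn (continuousOn_dRad hK)

lemma continuousOn_rad (hK : IsSmoothConvexBody K) : ContinuousOn (rad K) {(0 : Eu n)}ᶜ :=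
  fun _ hx => (hasFDerivAt_rad hK hx).continuousAt.continuousWithinAt

lemma integrable_tst_mul (hK : IsSmoothConvexBody K) (g : Eu n → ℝ) (hg : Continuous g) :
    Integrable (fun y => tst K y * g y) := by
  rw [cov_integrable hK]
  have hb := bmp_contDiff.continuous
  have : IntegrableOn (fun x => (dRad K x).det * (bmp ‖x‖ * g (rad K x))) {(0 : Eu n)}ᶜ := by
    apply integrableOn_of_annulus
    · exact (continuousOn_det hK).mul ((hb.comp continuous_norm).continuousOn.mul
        (hg.comp_continuousOn (continuousOn_rad hK)))
    · intro x hx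
      rw [bmp_zero fun h => hx ⟨h.1.le, h.2.le⟩]; simp
  refine this.congr_fun (fun x hx => ?_) (measurableSet_singleton (0 : Eu n)).compl
  simp only [tst_rad hK hx]

lemma integrable_dTst_mul (hK : IsSmoothConvexBody K) (w : Eu n) (g : Eu n → ℝ)
    (hg : Continuous g) : Integrable (fun y => dTst K y w * g y) := by
  rw [cov_integrable hK]
  have hb := bmp_deriv_cont
  have : IntegrableOn (fun x => (dRad K x).det *
      (deriv bmp ‖x‖ * (sfn K x)⁻¹ * ⟪x, w⟫_ℝ * g (rad K x))) {(0 : Eu n)}ᶜ := by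
    apply integrableOn_of_annulus
    · refine (continuousOn_det hK).mul (((ContinuousOn.mul ?_ ?_).mul ?_).mul
        (hg.comp_continuousOn (continuousOn_rad hK)))
      · exact (hb.comp continuous_norm).continuousOn
      · exact (continuousOn_sfn hK).inv₀ fun x hx => (sfn_pos hK hx).ne'
      · fun_prop
    · intro x hx
      rw [bmp_deriv_zero hx]; simp
  refine this.congr_fun (fun x hx => ?_) (measurableSet_singleton (0 : Eu n)).compl
  simp [dTst_rad hK hx]

theorem main (hK : IsSmoothConvexBody K) (w₁ w₂ : Eu n) :
      ∫ x : Sph n, ⟪(x : Eu n), w₁⟫_ℝ * ⟪gradient (sfn K) (x : Eu n), w₂⟫_ℝ *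
          rK K (x : Eu n) ∂sphMeas n =
        (1 / ((n : ℝ) + 1) * ∫ x : Sph n, dens K (x : Eu n) ∂sphMeas n) * ⟪w₁, w₂⟫_ℝ := by
  have hg : ∀ y : Eu n, HasFDerivAt (fun y : Eu n => ⟪w₂, y⟫_ℝ) (innerSL ℝ w₂) y :=
    fun y => (innerSL ℝ w₂).hasFDerivAt
  have hu : ∀ y, fderiv ℝ (tst K) y = dTst K y := fun y => (hasFDerivAt_tst hK y).fderiv
  have hg' : ∀ y, fderiv ℝ (fun y : Eu n => ⟪w₂, y⟫_ℝ) y = innerSL ℝ w₂ := fun y => (hg y).fderiv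
  have ibp := integral_mul_fderiv_eq_neg_fderiv_mul_of_integrable
    (μ := (volume : Measure (Eu n))) (f := tst K)
    (g := fun y : Eu n => ⟪w₂, y⟫_ℝ) (v := w₁)
    (by simp only [hu]; exact integrable_dTst_mul hK w₁ _ (by fun_prop))
    (by simp only [hg']; exact integrable_tst_mul hK _ (by fun_prop))
    (integrable_tst_mul hK _ (by fun_prop))
    (fun y _ => (hasFDerivAt_tst hK y).differentiableAt)
    (fun y _ => (hg y).differentiableAt)
  simp only [hu, hg'] at ibp
  rw [cov_integral hK, cov_integral hK] at ibp
  have e1 : ∫ x in {(0 : Eu n)}ᶜ, (dRad K x).det * (tst K (rad K x) * (innerSL ℝ w₂) w₁) =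
      ∫ x in {(0 : Eu n)}ᶜ, bmp ‖x‖ * (dens K (‖x‖⁻¹ • x) * ⟪w₁, w₂⟫_ℝ) := by
    refine setIntegral_congr_fun (measurableSet_singleton (0 : Eu n)).compl fun x hx => ?_
    simp only [tst_rad hK hx, det_dRad hK hx, dens, innerSL_apply_apply, real_inner_comm w₁ w₂]
    ring
  have e2 : ∫ x in {(0 : Eu n)}ᶜ, (dRad K x).det *
        (dTst K (rad K x) w₁ * ⟪w₂, rad K x⟫_ℝ) =
      ∫ x in {(0 : Eu n)}ᶜ, (‖x‖ * deriv bmp ‖x‖) *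
        (fun z : Eu n => ⟪z, w₁⟫_ℝ * ⟪gradient (sfn K) z, w₂⟫_ℝ * rK K z) (‖x‖⁻¹ • x) := by
    refine setIntegral_congr_fun (measurableSet_singleton (0 : Eu n)).compl fun x hx => ?_
    have hx1 := nrm_pos hx
    have hx2 := sfn_pos hK hx
    simp only [dTst_rad hK hx]
    simp only [det_dRad hK hx, rad, sfn_smul hK (inv_pos.2 hx1),
      grad_smul hK (inv_pos.2 hx1) hx, inner_smul_left, inner_smul_right, real_inner_comm w₂]
    simp
    field_simp
  rw [e1, e2, polar bmp (fun z => dens K z * ⟪w₁, w₂⟫_ℝ),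
    polar (fun t => t * deriv bmp t) (fun z : Eu n => ⟪z, w₁⟫_ℝ * ⟪gradient (sfn K) z, w₂⟫_ℝ * rK K z),
    bmp_ibp, integral_mul_const] at ibp
  have hI := bmp_int_pos (n := n)
  set I := ∫ t in Set.Ioi (0 : ℝ), t ^ n * bmp t
  have hn : (0 : ℝ) < (n : ℝ) + 1 := by positivity
  field_simp
  apply mul_left_cancel₀ hI.ne'
  linarith

end DivId

/-- `∫ X ⊗ (x/h) dV = ((∫ dV)/(n+1)) Id`, i.e. for all `w₁, w₂`:
`∫ ⟨x,w₁⟩ ⟨∇h_K(x),w₂⟩ det(A+x⊗x) dθ = ((1/(n+1)) ∫ h det(A+x⊗x) dθ) ⟨w₁,w₂⟩`. -/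
theorem divergence_identity (n : ℕ) (hn : 1 ≤ n)
    (K : Set (Eu n)) (hK : IsSmoothConvexBody K) :
    ∀ w₁ w₂ : Eu n,
      ∫ x : Sph n, ⟪(x : Eu n), w₁⟫_ℝ * ⟪gradient (sfn K) (x : Eu n), w₂⟫_ℝ *
          rK K (x : Eu n) ∂sphMeas n =
        (1 / ((n : ℝ) + 1) * ∫ x : Sph n, dens K (x : Eu n) ∂sphMeas n) * ⟪w₁, w₂⟫_ℝ := by
  exact fun w₁ w₂ => DivId.main hK w₁ w₂
end
end
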